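/- Assume the Riemann Hypothesis. There exists an absolute constant C > 0 such that for all X ≥ 1 and all δ with 0 < δ ≤ 1, ∫_{1}^{X} (ψ(x+δx) − ψ(x) − δx)² dx ≤ C·δ·X²·(log(2/δ))². -/

import Mathlib

open Real MeasureTheory

/-- The Chebyshev function `ψ(x) = ∑_{n ≤ x} Λ(n)`. -/
noncomputable def chebyshevPsi (x : ℝ) : ℝ :=
  ∑ n ∈ Finset.range (⌊x⌋₊ + 1), ArithmeticFunction.vonMangoldt n


namespace SV
open scoped FourierTransform SchwartzMap ContDiff ComplexInnerProductSpace

lemma fourier_ae_eq (f : ℝ → ℂ) (h1 : Integrable f) (h2 : MemLp f 2) :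
    (𝓕 (h2.toLp f) : Lp ℂ 2 (volume : Measure ℝ)) =ᵐ[volume] 𝓕 f := by
  have hcont : Continuous (𝓕 f) :=
    VectorFourier.fourierIntegral_continuous Real.continuous_fourierChar
      (by exact continuous_inner) h1
  apply ae_eq_of_integral_contDiff_smul_eq
  · exact (Lp.memLp _).locallyIntegrable (by norm_num)
  · exact hcont.locallyIntegrable
  intro g hg hgs
  have hg' : ContDiff ℝ ∞ (fun x => (g x : ℂ)) := Complex.ofRealCLM.contDiff.comp hg
  have hgs' : HasCompactSupport (fun x => (g x : ℂ)) := hgs.comp_left (g := fun x : ℝ => (x:ℂ)) (by simp)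
  let φ : 𝓢(ℝ, ℂ) := hgs'.toSchwartzMap hg'
  have e1 := congrArg (fun D => D φ) (Lp.fourier_toTemperedDistribution_eq (h2.toLp f))
  simp only [TemperedDistribution.fourier_apply, Lp.toTemperedDistribution_apply] at e1
  have e2 : ∫ x, g x • (𝓕 (h2.toLp f) : Lp ℂ 2 (volume : Measure ℝ)) x
      = ∫ x, φ x • (𝓕 (h2.toLp f) : Lp ℂ 2 (volume : Measure ℝ)) x := by
    apply integral_congr_ae
    filter_upwards with x
    simp [φ]
  rw [e2, ← e1]
  have e3 : ∫ x, (𝓕 φ) x • (h2.toLp f) x = ∫ x, (𝓕 φ) x • f x := by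
    apply integral_congr_ae
    filter_upwards [h2.coeFn_toLp] with x hx
    rw [hx]
  rw [e3]
  have := VectorFourier.integral_bilin_fourierIntegral_eq_flip (ContinuousLinearMap.mul ℂ ℂ) (L := innerₗ ℝ)
    (μ := volume) (ν := volume) (f := (φ : ℝ → ℂ)) (g := f) Real.continuous_fourierChar continuous_inner φ.integrable h1
  simp only [flip_innerₗ] at this
  calc _ = _ := this
    _ = _ := by
      apply integral_congr_ae
      filter_upwards with x
      simp only [φ, ContinuousLinearMap.mul_apply', HasCompactSupport.toSchwartzMap_toFun]
      simp [φ]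
      left; rfl

lemma fourier_memLp (f : ℝ → ℂ) (h1 : Integrable f) (h2 : MemLp f 2) : MemLp (𝓕 f) 2 :=
  (memLp_congr_ae (fourier_ae_eq f h1 h2)).1 (Lp.memLp _)

lemma parseval (f g : ℝ → ℂ) (hf1 : Integrable f) (hf2 : MemLp f 2) (hg1 : Integrable g)
    (hg2 : MemLp g 2) :
    ∫ x, (starRingEnd ℂ) (𝓕 f x) * 𝓕 g x = ∫ x, (starRingEnd ℂ) (f x) * g x := by
  have h := Lp.inner_fourier_eq (hf2.toLp f) (hg2.toLp g)
  rw [L2.inner_def, L2.inner_def] at h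
  have e1 : ∫ a, ⟪(𝓕 (hf2.toLp f) : Lp ℂ 2 (volume : Measure ℝ)) a, (𝓕 (hg2.toLp g) : Lp ℂ 2 (volume : Measure ℝ)) a⟫
    = ∫ x, (starRingEnd ℂ) (𝓕 f x) * 𝓕 g x := by
    apply integral_congr_ae
    filter_upwards [fourier_ae_eq f hf1 hf2, fourier_ae_eq g hg1 hg2] with x h1 h2
    rw [h1, h2]; simp [mul_comm]
  have e2 : ∫ a, ⟪(hf2.toLp f) a, (hg2.toLp g) a⟫
    = ∫ x, (starRingEnd ℂ) (f x) * g x := by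
    apply integral_congr_ae
    filter_upwards [hf2.coeFn_toLp, hg2.coeFn_toLp] with x h1 h2
    rw [h1, h2]; simp [mul_comm]
  rw [← e1, ← e2, h]

end SV


namespace SV
open scoped FourierTransform Topology
open Filter

lemma lap_diff (a : ℝ → ℂ) (ha : Measurable a) (K V : ℝ) (hK : ∀ u, ‖a u‖ ≤ K)
    (h0 : ∀ u, u < 0 → a u = 0) (hV : ∀ u, V < u → a u = 0) :
    Differentiable ℂ (fun s : ℂ => ∫ u : ℝ, a u * Complex.exp (s * u)) := by
  intro s0
  have hKn : 0 ≤ K := (norm_nonneg _).trans (hK 0)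
  have key : ∀ (s : ℂ) (u : ℝ), ‖a u * Complex.exp (s * u)‖ ≤
      (Set.Icc 0 V).indicator (fun _ => K * Real.exp (|s.re| * |V|)) u := by
    intro s u
    by_cases hu : u ∈ Set.Icc 0 V
    · rw [Set.indicator_of_mem hu, norm_mul, Complex.norm_exp]
      gcongr
      · exact hK u
      · simp only [Complex.mul_re, Complex.ofReal_re, Complex.ofReal_im, mul_zero, sub_zero]
        have h1 : u ≤ |V| := hu.2.trans (le_abs_self _)
        have h2 := hu.1
        calc s.re * u ≤ |s.re| * u := by gcongr; exact le_abs_self _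
          _ ≤ _ := by gcongr
    · rw [Set.indicator_of_notMem hu]
      have : a u = 0 := by
        simp only [Set.mem_Icc, not_and_or, not_le] at hu
        rcases hu with h | h
        · exact h0 u h
        · exact hV u h
      simp [this]
  have hint : ∀ c : ℝ, Integrable ((Set.Icc 0 V).indicator (fun _ : ℝ => c)) := by
    intro c
    rw [integrable_indicator_iff measurableSet_Icc]
    exact integrableOn_const (by simp)
  have hm : ∀ s : ℂ, AEStronglyMeasurable (fun u : ℝ => a u * Complex.exp (s * u)) := by
    intro s
    exact (ha.mul (by fun_prop)).aestronglyMeasurable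
  refine (hasDerivAt_integral_of_dominated_loc_of_deriv_le
    (F := fun (s : ℂ) (u : ℝ) => a u * Complex.exp (s * u))
    (F' := fun (s : ℂ) (u : ℝ) => (u * a u) * Complex.exp (s * u))
    (bound := (Set.Icc 0 V).indicator (fun _ => |V| * (K * Real.exp ((|s0.re|+1) * |V|))))
    (Metric.ball_mem_nhds s0 one_pos)
    (Eventually.of_forall hm) ?_ ?_ ?_ (hint _) ?_).2.differentiableAt
  · exact (hint _).mono' (hm s0) (Eventually.of_forall (key s0))
  · exact ((by fun_prop : Measurable (fun u : ℝ => (u : ℂ) * a u)).mul (by fun_prop)).aestronglyMeasurable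
  · filter_upwards with u s hs
    have h1 := key s u
    by_cases hu : u ∈ Set.Icc 0 V
    · rw [Set.indicator_of_mem hu] at h1 ⊢
      rw [mul_assoc, norm_mul]
      have h3 : |s.re| ≤ |s0.re| + 1 := by
        have := Complex.abs_re_le_norm (s - s0)
        rw [Metric.mem_ball, dist_eq_norm] at hs
        have h4 : |s.re| ≤ |(s - s0).re| + |s0.re| := by
          have := abs_add_le (s - s0).re s0.re
          simpa using this
        linarith
      gcongr
      · simp only [Complex.norm_real, Real.norm_eq_abs]
        rw [abs_of_nonneg hu.1]
        exact hu.2.trans (le_abs_self _)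
      · exact h1.trans (by gcongr)
    · rw [Set.indicator_of_notMem hu] at h1 ⊢
      have := norm_le_zero_iff.1 h1
      rw [mul_assoc, this]; simp
  · filter_upwards with u s hs
    have : HasDerivAt (fun s : ℂ => a u * Complex.exp (s * u)) (a u * (Complex.exp (s * u) * (1 * u))) s :=
      (((hasDerivAt_id s).mul_const (u:ℂ)).cexp).const_mul _
    refine this.congr_deriv ?_
    ring

lemma memLp2_of_bdd (p : ℝ → ℂ) (h : Integrable p) (C : ℝ) (hb : ∀ u, ‖p u‖ ≤ C) : MemLp p 2 := by
  rw [memLp_two_iff_integrable_sq_norm h.aestronglyMeasurable]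
  refine (h.norm.const_mul C).mono' (h.aestronglyMeasurable.norm.pow 2) (Eventually.of_forall fun u => ?_)
  rw [Real.norm_eq_abs, abs_of_nonneg (by positivity), sq]
  exact mul_le_mul_of_nonneg_right (hb u) (norm_nonneg _)

lemma shift (G : ℂ → ℂ) (a b : ℝ) (hab : a ≤ b)
    (hG : ∀ s : ℂ, a ≤ s.re → s.re ≤ b → DifferentiableAt ℂ G s)
    (B : ℝ → ℝ) (hB1 : Tendsto B atTop (𝓝 0)) (hB2 : Tendsto B atBot (𝓝 0))
    (hGB : ∀ s : ℂ, a ≤ s.re → s.re ≤ b → ‖G s‖ ≤ B s.im)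
    (ha : Integrable (fun t : ℝ => G (a + t * Complex.I)))
    (hb : Integrable (fun t : ℝ => G (b + t * Complex.I))) :
    ∫ t : ℝ, G (a + t * Complex.I) = ∫ t : ℝ, G (b + t * Complex.I) := by
  have hrect : ∀ T : ℝ, (∫ x in a..b, G (x + (-T : ℝ) * Complex.I)) - (∫ x in a..b, G (x + (T:ℝ) * Complex.I))
      + Complex.I • (∫ y in (-T)..T, G (b + y * Complex.I)) - Complex.I • (∫ y in (-T)..T, G (a + y * Complex.I)) = 0 := by
    intro T
    have := Complex.integral_boundary_rect_eq_zero_of_differentiableOn G (⟨a, -T⟩ : ℂ) ⟨b, T⟩ ?_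
    · simpa using this
    · intro s hs
      rw [Complex.mem_reProdIm] at hs
      simp only [Set.uIcc_of_le hab] at hs
      exact (hG s hs.1.1 hs.1.2).differentiableWithinAt
  have hor : ∀ y : ℝ, ‖∫ x in a..b, G (x + (y:ℝ) * Complex.I)‖ ≤ B y * |b - a| := by
    intro y
    refine intervalIntegral.norm_integral_le_of_norm_le_const fun x hx => ?_
    rw [Set.uIoc_of_le hab] at hx
    have := hGB (x + y * Complex.I) (by simpa using hx.1.le) (by simpa using hx.2)
    simpa using this
  have h1 : Tendsto (fun T : ℝ => ∫ x in a..b, G (x + (T:ℝ) * Complex.I)) atTop (𝓝 0) := by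
    refine squeeze_zero_norm hor ?_
    simpa using hB1.mul_const (|b-a|)
  have h2 : Tendsto (fun T : ℝ => ∫ x in a..b, G (x + (-T:ℝ) * Complex.I)) atTop (𝓝 0) := by
    refine squeeze_zero_norm (fun T => hor (-T)) ?_
    simpa using (hB2.comp tendsto_neg_atTop_atBot).mul_const (|b-a|)
  have h3 := intervalIntegral_tendsto_integral hb tendsto_neg_atTop_atBot tendsto_id
  have h4 := intervalIntegral_tendsto_integral ha tendsto_neg_atTop_atBot tendsto_id
  have h5 := ((h2.sub h1).add (h3.const_smul Complex.I)).sub (h4.const_smul Complex.I)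
  have h6 := tendsto_nhds_unique (h5.congr (fun T => hrect T)) tendsto_const_nhds
  simp only [sub_zero, zero_add, smul_eq_mul, ← mul_sub, mul_eq_zero, Complex.I_ne_zero, false_or] at h6
  exact (sub_eq_zero.1 h6).symm

lemma pw (q : ℝ → ℂ) (E : ℂ → ℂ) (σ0 : ℝ) (hσ : σ0 < 2) (hqm : Measurable q)
    (hq0 : ∀ u, u < 0 → q u = 0) (C : ℝ) (hq : ∀ u, 0 ≤ u → ‖q u‖ ≤ C * Real.exp u)
    (hE : ∀ s : ℂ, σ0 ≤ s.re → s.re ≤ 2 → DifferentiableAt ℂ E s)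
    (hL : ∀ t : ℝ, E (2 + t * Complex.I) = ∫ u : ℝ, q u * Complex.exp (-((2 + t * Complex.I) * u)))
    (B : ℝ → ℝ) (hB1 : Tendsto B atTop (𝓝 0)) (hB2 : Tendsto B atBot (𝓝 0))
    (hEB : ∀ s : ℂ, σ0 ≤ s.re → s.re ≤ 2 → ‖E s‖ ≤ B s.im)
    (hL2 : Integrable (fun t : ℝ => ‖E (σ0 + t * Complex.I)‖ ^ 2)) (V : ℝ) (hV : 0 ≤ V) :
    ∫ u in (0:ℝ)..V, ‖q u‖ ^ 2 * Real.exp (-2 * σ0 * u) ≤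
      (1 / (2 * π)) * ∫ t : ℝ, ‖E (σ0 + t * Complex.I)‖ ^ 2 := by
  have hC : 0 ≤ C := by
    have := (norm_nonneg _).trans (hq 0 le_rfl); simpa using this
  set p : ℝ → ℂ := fun u => q u * Complex.exp (-(2 * u)) with hp
  have hpm : Measurable p := by fun_prop
  have hpb : ∀ u, ‖p u‖ ≤ (Set.Ici 0).indicator (fun u => C * Real.exp (-u)) u := by
    intro u
    by_cases hu : 0 ≤ u
    · rw [Set.indicator_of_mem (Set.mem_Ici.2 hu), hp]
      simp only [norm_mul, Complex.norm_exp]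
      have : (-(2 * (u:ℂ))).re = -(2 * u) := by simp
      rw [this]
      calc _ ≤ C * Real.exp u * Real.exp (-(2*u)) := by gcongr; exact hq u hu
        _ = _ := by rw [mul_assoc, ← Real.exp_add]; ring_nf
    · rw [Set.indicator_of_notMem (by simpa using hu), hp]
      simp [hq0 u (not_le.1 hu)]
  have hp1 : Integrable p := by
    refine Integrable.mono' ?_ hpm.aestronglyMeasurable (Eventually.of_forall hpb)
    rw [integrable_indicator_iff measurableSet_Ici, integrableOn_Ici_iff_integrableOn_Ioi]
    exact (integrableOn_exp_neg_Ioi 0).const_mul C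
  have hp2 : MemLp p 2 := by
    refine memLp2_of_bdd p hp1 C fun u => (hpb u).trans ?_
    by_cases hu : 0 ≤ u
    · rw [Set.indicator_of_mem (Set.mem_Ici.2 hu)]
      have : Real.exp (-u) ≤ 1 := Real.exp_le_one_iff.2 (by linarith)
      nlinarith
    · rw [Set.indicator_of_notMem (by simpa using hu)]; exact hC
  -- test function
  set φ : ℝ → ℂ := (Set.Icc 0 V).indicator (fun u => (starRingEnd ℂ) (q u) * Real.exp (-2 * σ0 * u)) with hφ
  have hφm : Measurable φ := by
    refine Measurable.indicator ?_ measurableSet_Icc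
    exact (Complex.continuous_conj.measurable.comp hqm).mul (by fun_prop)
  obtain ⟨K, hK⟩ : ∃ K, ∀ u, ‖φ u‖ ≤ K := by
    refine ⟨C * Real.exp V * Real.exp (2 * |σ0| * V), fun u => ?_⟩
    by_cases hu : u ∈ Set.Icc 0 V
    · rw [hφ, Set.indicator_of_mem hu, norm_mul, RCLike.norm_conj, Complex.norm_real, Real.norm_eq_abs, Real.abs_exp]
      have h1 := hq u hu.1
      have h2 : -2 * σ0 * u ≤ 2 * |σ0| * V := by
        have := neg_abs_le σ0
        have := hu.1
        have h3 := hu.2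
        calc -2 * σ0 * u ≤ 2 * |σ0| * u := by nlinarith
          _ ≤ _ := by gcongr
      calc _ ≤ C * Real.exp u * Real.exp (-2 * σ0 * u) := by gcongr
        _ ≤ _ := by gcongr; exact hu.2
    · rw [hφ, Set.indicator_of_notMem hu, norm_zero]; positivity
  have hφ0 : ∀ u, u < 0 → φ u = 0 := fun u hu => Set.indicator_of_notMem (by simp [hu]) _
  have hφV : ∀ u, V < u → φ u = 0 := fun u hu => Set.indicator_of_notMem (by simp [hu]) _
  have hKn : 0 ≤ K := (norm_nonneg _).trans (hK 0)
  set Φ : ℂ → ℂ := fun s => ∫ u : ℝ, φ u * Complex.exp (s * u) with hΦ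
  have hΦd : Differentiable ℂ Φ := lap_diff φ hφm K V hK hφ0 hφV
  have hint : ∀ c : ℝ, Integrable ((Set.Icc 0 V).indicator (fun _ : ℝ => c)) := by
    intro c
    rw [integrable_indicator_iff measurableSet_Icc]
    exact integrableOn_const (by simp)
  have key : ∀ (s : ℂ) (u : ℝ), |s.re| ≤ |σ0| + 2 → ‖φ u * Complex.exp (s * u)‖ ≤
      (Set.Icc 0 V).indicator (fun _ => K * Real.exp ((|σ0|+2) * V)) u := by
    intro s u hs
    by_cases hu : u ∈ Set.Icc 0 V
    · rw [Set.indicator_of_mem hu, norm_mul, Complex.norm_exp]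
      gcongr
      · exact hK u
      · simp only [Complex.mul_re, Complex.ofReal_re, Complex.ofReal_im, mul_zero, sub_zero]
        have h2 := hu.1
        calc s.re * u ≤ |s.re| * u := by gcongr; exact le_abs_self _
          _ ≤ _ := by gcongr; exact hu.2
    · rw [Set.indicator_of_notMem hu, hφ, Set.indicator_of_notMem hu]; simp
  set K1 : ℝ := K * Real.exp ((|σ0|+2) * V) with hK1
  have hK1n : 0 ≤ K1 := by positivity
  set M : ℝ := ∫ u, (Set.Icc 0 V).indicator (fun _ => K1) u with hM
  have hΦb : ∀ s : ℂ, |s.re| ≤ |σ0| + 2 → ‖Φ s‖ ≤ M := by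
    intro s hs
    exact norm_integral_le_of_norm_le (hint _) (Eventually.of_forall fun u => key s u hs)
  -- functions for parseval
  set F : ℝ → ℝ → ℂ := fun σ u => (starRingEnd ℂ) (φ u * Complex.exp ((σ : ℂ) * u)) with hF
  have hFm : ∀ σ, Measurable (F σ) := by
    intro σ
    exact Complex.continuous_conj.measurable.comp (hφm.mul (by fun_prop))
  have hFb : ∀ σ, |σ| ≤ |σ0| + 2 → ∀ u, ‖F σ u‖ ≤ (Set.Icc 0 V).indicator (fun _ => K1) u := by
    intro σ hs u
    rw [hF]; simp only [RCLike.norm_conj]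
    exact key σ u (by simpa using hs)
  have hF1 : ∀ σ, |σ| ≤ |σ0| + 2 → Integrable (F σ) := fun σ hs =>
    (hint K1).mono' (hFm σ).aestronglyMeasurable (Eventually.of_forall (hFb σ hs))
  have hF2 : ∀ σ, |σ| ≤ |σ0| + 2 → MemLp (F σ) 2 := fun σ hs =>
    memLp2_of_bdd _ (hF1 σ hs) K1 fun u => (hFb σ hs u).trans (by
      by_cases hu : u ∈ Set.Icc 0 V
      · rw [Set.indicator_of_mem hu]
      · rw [Set.indicator_of_notMem hu]; exact hK1n)
  have hFF : ∀ σ x : ℝ, (starRingEnd ℂ) (𝓕 (F σ) x) = Φ (σ + (2 * π * x : ℝ) * Complex.I) := by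
    intro σ x
    rw [Real.fourier_eq', hΦ, ← integral_conj]
    congr 1; ext u
    simp only [hF, smul_eq_mul, map_mul, Complex.conj_conj, ← Complex.exp_conj]
    rw [mul_left_comm, ← Complex.exp_add]
    congr 2
    have h2 : (starRingEnd ℂ) 2 = 2 := Complex.conj_ofNat 2
    simp [h2]
    ring
  have hpE : ∀ x : ℝ, 𝓕 p x = E (2 + (2 * π * x : ℝ) * Complex.I) := by
    intro x
    rw [Real.fourier_eq', hL]
    congr 1; ext u
    simp only [hp, smul_eq_mul]
    rw [mul_left_comm, ← Complex.exp_add]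
    congr 2
    simp
    ring
  have a2 : |(2:ℝ)| ≤ |σ0| + 2 := by
    rw [abs_of_pos two_pos]; have := abs_nonneg σ0; linarith
  have a0 : |σ0| ≤ |σ0| + 2 := by linarith
  set J : ℝ := ∫ u in (0:ℝ)..V, ‖q u‖ ^ 2 * Real.exp (-2 * σ0 * u) with hJ
  have hJi : J = ∫ u : ℝ, (Set.Icc 0 V).indicator (fun u => ‖q u‖ ^ 2 * Real.exp (-2 * σ0 * u)) u := by
    rw [hJ, intervalIntegral.integral_of_le hV, integral_indicator measurableSet_Icc, integral_Icc_eq_integral_Ioc]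
  have e1 : ∫ x : ℝ, Φ (2 + (2 * π * x : ℝ) * Complex.I) * E (2 + (2 * π * x : ℝ) * Complex.I) = (J : ℂ) := by
    have h := parseval (F 2) p (hF1 2 a2) (hF2 2 a2) hp1 hp2
    simp only [hFF, hpE] at h
    rw [hJi, ← integral_complex_ofReal]
    simp only [Complex.ofReal_ofNat] at h
    rw [h]
    congr 1; ext u
    by_cases hu : u ∈ Set.Icc 0 V
    · simp only [hF, hp, hφ, Set.indicator_of_mem hu, Complex.conj_conj]
      have h3 : Complex.exp (((2:ℝ):ℂ) * u) * Complex.exp (-(2 * u)) = 1 := by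
        rw [← Complex.exp_add]; simp
      have h4 := Complex.conj_mul' (q u)
      push_cast at h3 h4 ⊢
      linear_combination (Complex.exp (-2 * σ0 * u)) * h4 + (starRingEnd ℂ) (q u) * q u * Complex.exp (-2 * σ0 * u) * h3
    · simp [hF, hφ, Set.indicator_of_notMem hu]
  have e2 : ∫ x : ℝ, ‖Φ (σ0 + (2 * π * x : ℝ) * Complex.I)‖ ^ 2 = J := by
    have h := parseval (F σ0) (F σ0) (hF1 _ a0) (hF2 _ a0) (hF1 _ a0) (hF2 _ a0)
    simp only [Complex.conj_mul'] at h
    rw [hJi]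
    have h' : ∀ x : ℝ, ‖𝓕 (F σ0) x‖ = ‖Φ (σ0 + (2 * π * x : ℝ) * Complex.I)‖ := by
      intro x; rw [← hFF, RCLike.norm_conj]
    simp only [h', ← Complex.ofReal_pow, integral_complex_ofReal] at h
    rw [Complex.ofReal_inj.1 h]
    congr 1; ext u
    by_cases hu : u ∈ Set.Icc 0 V
    · simp only [hF, hφ, Set.indicator_of_mem hu, RCLike.norm_conj, norm_mul, Complex.norm_exp, Complex.norm_real, Real.norm_eq_abs, Real.abs_exp]
      have : ((σ0:ℂ) * u).re = σ0 * u := by simp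
      rw [this, mul_pow, mul_pow, mul_assoc, ← Real.exp_nat_mul, ← Real.exp_nat_mul, ← Real.exp_add]
      congr 2; push_cast; ring
    · simp [hF, hφ, Set.indicator_of_notMem hu]
  have hi2 : Integrable (fun x : ℝ => Φ (2 + (2 * π * x : ℝ) * Complex.I) * E (2 + (2 * π * x : ℝ) * Complex.I)) := by
    have := (fourier_memLp _ (hF1 2 a2) (hF2 2 a2)).star.integrable_mul (fourier_memLp p hp1 hp2)
    refine this.congr (Eventually.of_forall fun x => ?_)
    have h := hFF 2 x
    simp only [Complex.ofReal_ofNat] at h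
    simp only [Pi.mul_apply, Pi.star_apply, hpE, RCLike.star_def, h]
  have hi0 : Integrable (fun x : ℝ => ‖Φ (σ0 + (2 * π * x : ℝ) * Complex.I)‖ ^ 2) := by
    have := (memLp_two_iff_integrable_sq_norm (fourier_memLp _ (hF1 _ a0) (hF2 _ a0)).aestronglyMeasurable).1 (fourier_memLp _ (hF1 _ a0) (hF2 _ a0))
    refine this.congr (Eventually.of_forall fun x => ?_)
    simp only [← hFF, RCLike.norm_conj]
  have hπ : (2 * π) ≠ 0 := by positivity
  have hi2' : Integrable (fun t : ℝ => Φ ((2:ℝ) + t * Complex.I) * E ((2:ℝ) + t * Complex.I)) := by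
    rw [← integrable_comp_mul_left_iff _ hπ]
    simpa using hi2
  have hi0' : Integrable (fun t : ℝ => ‖Φ (σ0 + t * Complex.I)‖ ^ 2) := by
    rw [← integrable_comp_mul_left_iff _ hπ]
    simpa using hi0
  have e1' : ∫ t : ℝ, Φ ((2:ℝ) + t * Complex.I) * E ((2:ℝ) + t * Complex.I) = 2 * π * (J : ℂ) := by
    have := Measure.integral_comp_mul_left (fun t : ℝ => Φ ((2:ℝ) + t * Complex.I) * E ((2:ℝ) + t * Complex.I)) (2 * π)
    rw [Complex.ofReal_ofNat, e1, abs_of_pos (by positivity)] at this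
    rw [this, Complex.real_smul]
    have h3 : (π:ℂ) ≠ 0 := by exact_mod_cast Real.pi_ne_zero
    have h4 : 2 * (π:ℂ) * ((2 * π)⁻¹ : ℝ) = 1 := by
      push_cast
      field_simp
    rw [Complex.ofReal_ofNat, ← mul_assoc, h4, one_mul]
  have e2' : ∫ t : ℝ, ‖Φ (σ0 + t * Complex.I)‖ ^ 2 = 2 * π * J := by
    have := Measure.integral_comp_mul_left (fun t : ℝ => ‖Φ (σ0 + t * Complex.I)‖ ^ 2) (2 * π)
    rw [e2, abs_of_pos (by positivity)] at this
    rw [this, smul_eq_mul, ← mul_assoc, mul_inv_cancel₀ hπ, one_mul]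
  have hEc : Continuous (fun t : ℝ => E (σ0 + t * Complex.I)) := by
    rw [continuous_iff_continuousAt]
    intro t
    have h := (hE (σ0 + t * Complex.I) (by simp) (by simpa using hσ.le)).continuousAt
    exact ContinuousAt.comp (f := fun t : ℝ => (σ0 + t * Complex.I : ℂ)) h (by fun_prop)
  have hΦc : Continuous (fun t : ℝ => Φ (σ0 + t * Complex.I)) :=
    hΦd.continuous.comp (by fun_prop)
  have hpt : ∀ t : ℝ, ‖Φ (σ0 + t * Complex.I) * E (σ0 + t * Complex.I)‖ ≤
      (‖Φ (σ0 + t * Complex.I)‖ ^ 2 + ‖E (σ0 + t * Complex.I)‖ ^ 2) / 2 := by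
    intro t
    rw [norm_mul]
    nlinarith [sq_nonneg (‖Φ (σ0 + t * Complex.I)‖ - ‖E (σ0 + t * Complex.I)‖)]
  have hsum := (hi0'.add hL2).div_const 2
  have hiE : Integrable (fun t : ℝ => Φ (σ0 + t * Complex.I) * E (σ0 + t * Complex.I)) :=
    hsum.mono' (hΦc.mul hEc).aestronglyMeasurable (Eventually.of_forall hpt)
  have hsh := shift (fun s => Φ s * E s) σ0 2 hσ.le (fun s h1 h2 => (hΦd s).mul (hE s h1 h2))
    (fun y => M * B y) (by simpa using hB1.const_mul M) (by simpa using hB2.const_mul M)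
    (fun s h1 h2 => by
      rw [norm_mul]
      have hs : |s.re| ≤ |σ0| + 2 := by
        rw [abs_le]
        have := neg_abs_le σ0
        have := abs_nonneg σ0
        constructor <;> linarith
      exact mul_le_mul (hΦb s hs) (hEB s h1 h2) (norm_nonneg _) ((norm_nonneg _).trans (hΦb s hs))) hiE hi2'
  rw [e1'] at hsh
  have hfin := norm_integral_le_of_norm_le hsum (Eventually.of_forall hpt)
  rw [hsh] at hfin
  have hJn : 0 ≤ J := by
    rw [hJ]; exact intervalIntegral.integral_nonneg hV fun u _ => by positivity
  have h7 : ‖2 * (π:ℂ) * (J:ℂ)‖ = 2 * π * J := by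
    rw [norm_mul, norm_mul, Complex.norm_real, Complex.norm_real, Real.norm_of_nonneg hJn, Real.norm_of_nonneg Real.pi_pos.le]
    simp
  rw [h7] at hfin
  simp only [Pi.add_apply] at hfin
  rw [integral_div, integral_add hi0' hL2, e2'] at hfin
  rw [one_div, ← div_eq_inv_mul, le_div_iff₀ (by positivity)]
  linarith

end SV


namespace SV
open scoped Topology
open Filter

noncomputable def zf : ℂ → ℂ := Function.update (fun s => (s - 1) * riemannZeta s) 1 1

lemma zf_ne {s : ℂ} (hs : s ≠ 1) : zf s = (s - 1) * riemannZeta s := Function.update_of_ne hs _ _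
lemma zf_one : zf 1 = 1 := Function.update_self _ _ _

lemma zf_diff : Differentiable ℂ zf := by
  have hne : ∀ s : ℂ, s ≠ 1 → DifferentiableAt ℂ zf s := by
    intro s hs
    have h : DifferentiableAt ℂ (fun s => (s - 1) * riemannZeta s) s :=
      (by fun_prop : DifferentiableAt ℂ (fun s : ℂ => s - 1) s).mul (differentiableAt_riemannZeta hs)
    refine h.congr_of_eventuallyEq ?_
    filter_upwards [isOpen_ne.mem_nhds hs] with z hz using zf_ne hz
  intro s
  by_cases hs : s = 1
  · subst hs
    refine (Complex.analyticAt_of_differentiable_on_punctured_nhds_of_continuousAt ?_ ?_).differentiableAt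
    · filter_upwards [self_mem_nhdsWithin] with z hz using hne z hz
    · unfold zf
      rw [continuousAt_update_same]
      exact riemannZeta_residue_one
  · exact hne s hs

noncomputable def gfr : ℝ → ℂ := (Set.Ioi (1:ℝ)).indicator (fun t => ((Int.fract t : ℝ) : ℂ))

lemma gfr_meas : Measurable gfr :=
  Measurable.indicator (Complex.measurable_ofReal.comp measurable_fract) measurableSet_Ioi

lemma gfr_norm (t : ℝ) : ‖gfr t‖ ≤ (Set.Ioi (1:ℝ)).indicator (fun _ => (1:ℝ)) t := by
  unfold gfr
  by_cases h : t ∈ Set.Ioi (1:ℝ)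
  · rw [Set.indicator_of_mem h, Set.indicator_of_mem h, Complex.norm_real, Real.norm_of_nonneg (Int.fract_nonneg t)]
    exact (Int.fract_lt_one t).le
  · rw [Set.indicator_of_notMem h, Set.indicator_of_notMem h]; simp

lemma gfr_norm1 (t : ℝ) : ‖gfr t‖ ≤ 1 :=
  (gfr_norm t).trans (Set.indicator_le_self' (fun _ _ => zero_le_one) t)

lemma mel_diff (z : ℂ) (hz : z.re < 0) : DifferentiableAt ℂ (mellin gfr) z := by
  refine mellin_differentiableAt_of_isBigO_rpow (a := 0) (b := z.re - 1) ?_ ?_ hz ?_ (by linarith)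
  · have : LocallyIntegrable gfr := by
      refine (locallyIntegrable_const (1:ℝ)).mono gfr_meas.aestronglyMeasurable (Eventually.of_forall fun t => ?_)
      simpa using gfr_norm1 t
    exact this.locallyIntegrableOn _
  · simp only [neg_zero, Real.rpow_zero]
    exact Asymptotics.IsBigO.of_bound 1 (Eventually.of_forall fun t => by simpa using gfr_norm1 t)
  · refine Asymptotics.IsBigO.of_bound 1 ?_
    have : Set.Iio (1:ℝ) ∈ 𝓝[>] (0:ℝ) := mem_nhdsWithin_of_mem_nhds (Iio_mem_nhds one_pos)
    filter_upwards [this] with t ht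
    have h := gfr_norm t
    rw [Set.indicator_of_notMem (by simpa using ht.le)] at h
    exact h.trans (by positivity)

lemma mel_eq (s : ℂ) : mellin gfr (-s) = ∫ t in Set.Ioi (1:ℝ), ((Int.fract t : ℝ) : ℂ) * (t:ℂ) ^ (-(s+1)) := by
  unfold mellin gfr
  have : ∀ t : ℝ, (t:ℂ) ^ (-s - 1) • (Set.Ioi (1:ℝ)).indicator (fun t => ((Int.fract t : ℝ) : ℂ)) t =
      (Set.Ioi (1:ℝ)).indicator (fun t : ℝ => ((Int.fract t : ℝ) : ℂ) * (t:ℂ) ^ (-(s+1))) t := by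
    intro t
    by_cases h : t ∈ Set.Ioi (1:ℝ)
    · rw [Set.indicator_of_mem h, Set.indicator_of_mem h, smul_eq_mul, mul_comm]; congr 2; ring
    · rw [Set.indicator_of_notMem h, Set.indicator_of_notMem h]; simp
  simp only [this]
  rw [setIntegral_indicator measurableSet_Ioi]
  congr 2
  rw [Set.inter_eq_right]
  exact Set.Ioi_subset_Ioi zero_le_one

lemma cpow_norm_int (s : ℂ) (t : ℝ) (ht : 1 < t) : ‖(t:ℂ) ^ (-(s+1))‖ = t ^ (-s.re - 1) := by
  rw [Complex.norm_cpow_eq_rpow_re_of_pos (by linarith)]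
  congr 1; simp; ring

lemma mel_bound (s : ℂ) (hs : 0 < s.re) : ‖mellin gfr (-s)‖ ≤ 1 / s.re := by
  rw [mel_eq]
  have h := integrableOn_Ioi_rpow_of_lt (a := -s.re - 1) (by linarith) one_pos
  have h2 := integral_Ioi_rpow_of_lt (a := -s.re - 1) (by linarith) one_pos
  have : 1 / s.re = ∫ t in Set.Ioi (1:ℝ), t ^ (-s.re - 1) := by
    rw [h2]; simp
  rw [this]
  refine norm_integral_le_of_norm_le h ?_
  filter_upwards [ae_restrict_mem measurableSet_Ioi] with t ht
  rw [norm_mul, cpow_norm_int s t ht, Complex.norm_real, Real.norm_of_nonneg (Int.fract_nonneg t)]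
  have : 0 ≤ t ^ (-s.re - 1) := Real.rpow_nonneg (by linarith [Set.mem_Ioi.1 ht]) _
  exact mul_le_of_le_one_left this (Int.fract_lt_one t).le

lemma zf_formula_one (s : ℂ) (hs : 1 < s.re) : zf s = s - s * (s - 1) * mellin gfr (-s) := by
  have hs1 : s ≠ 1 := by rintro rfl; simp at hs
  have hs1' : s - 1 ≠ 0 := sub_ne_zero.2 hs1
  rw [zf_ne hs1, ← LSeries_one_eq_riemannZeta hs]
  have hL := LSeries_eq_mul_integral (1 : ℕ → ℂ) zero_le_one hs ((LSeriesSummable_one_iff).2 hs) (by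
    refine Asymptotics.IsBigO.of_bound 1 (Eventually.of_forall fun n => ?_)
    simp)
  rw [hL, mel_eq]
  have h1 : ∫ t in Set.Ioi (1:ℝ), (t:ℂ) ^ (-s) = 1 / (s - 1) := by
    rw [integral_Ioi_cpow_of_lt (by simpa using hs) one_pos]
    rw [Complex.ofReal_one, Complex.one_cpow]
    rw [neg_div, ← div_neg]; congr 1; ring
  have hi1 := integrableOn_Ioi_cpow_of_lt (a := -s) (by simpa using hs) one_pos
  have hi2 : IntegrableOn (fun t : ℝ => ((Int.fract t : ℝ) : ℂ) * (t:ℂ) ^ (-(s+1))) (Set.Ioi 1) := by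
    have h := integrableOn_Ioi_rpow_of_lt (a := -s.re - 1) (by linarith) one_pos
    refine Integrable.mono' h ?_ ?_
    · refine AEStronglyMeasurable.mul (Complex.measurable_ofReal.comp measurable_fract).aestronglyMeasurable ?_
      exact (by fun_prop : Measurable (fun t : ℝ => (t:ℂ) ^ (-(s+1)))).aestronglyMeasurable
    · filter_upwards [ae_restrict_mem measurableSet_Ioi] with t ht
      rw [norm_mul, cpow_norm_int s t ht, Complex.norm_real, Real.norm_of_nonneg (Int.fract_nonneg t)]
      have : 0 ≤ t ^ (-s.re - 1) := Real.rpow_nonneg (by linarith [Set.mem_Ioi.1 ht]) _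
      exact mul_le_of_le_one_left this (Int.fract_lt_one t).le
  have h2 : ∫ t in Set.Ioi (1 : ℝ), (∑ k ∈ Finset.Icc 1 ⌊t⌋₊, (1 : ℕ → ℂ) k) * (t:ℂ) ^ (-(s + 1)) =
      (∫ t in Set.Ioi (1:ℝ), (t:ℂ) ^ (-s)) - ∫ t in Set.Ioi (1:ℝ), ((Int.fract t : ℝ) : ℂ) * (t:ℂ) ^ (-(s+1)) := by
    rw [← integral_sub hi1 hi2]
    refine setIntegral_congr_fun measurableSet_Ioi fun t ht => ?_
    have ht' : (0:ℝ) < t := by linarith [Set.mem_Ioi.1 ht]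
    have h3 : (t:ℂ) ^ (-s) = t * (t:ℂ) ^ (-(s+1)) := by
      have h0 : (t:ℂ) ≠ 0 := by exact_mod_cast ht'.ne'
      have h5 := Complex.cpow_add 1 (-(s+1)) h0
      rw [Complex.cpow_one] at h5
      rw [← h5]; congr 1; ring
    have h4 : ((⌊t⌋₊ : ℕ) : ℂ) = (t : ℂ) - ((Int.fract t : ℝ) : ℂ) := by
      have : ((⌊t⌋₊ : ℕ) : ℝ) = t - Int.fract t := by
        rw [natCast_floor_eq_intCast_floor ht'.le, Int.self_sub_fract]
      rw [← Complex.ofReal_sub, ← this]; simp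
    simp only [Pi.one_apply, Finset.sum_const, Nat.card_Icc, nsmul_eq_mul, mul_one, Nat.add_sub_cancel]
    rw [h4, h3]; ring
  rw [h2, h1]
  field_simp

lemma zf_formula (s : ℂ) (hs : 0 < s.re) : zf s = s - s * (s - 1) * mellin gfr (-s) := by
  have hopen : IsOpen {s : ℂ | 0 < s.re} := isOpen_lt continuous_const Complex.continuous_re
  have hconv : Convex ℝ {s : ℂ | 0 < s.re} := convex_halfSpace_re_gt 0
  have hG : DifferentiableOn ℂ (fun s : ℂ => s - s * (s - 1) * mellin gfr (-s)) {s : ℂ | 0 < s.re} := by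
    intro z hz
    have h1 : DifferentiableAt ℂ (fun s : ℂ => mellin gfr (-s)) z :=
      DifferentiableAt.comp (g := mellin gfr) (f := fun s : ℂ => -s) z (mel_diff (-z) (by simpa using hz)) (by fun_prop)
    have h2 : DifferentiableAt ℂ (fun s : ℂ => s * (s-1)) z := by fun_prop
    exact (differentiableAt_id.sub (h2.mul h1)).differentiableWithinAt
  refine (zf_diff.differentiableOn.analyticOnNhd hopen).eqOn_of_preconnected_of_eventuallyEq
    (hG.analyticOnNhd hopen) hconv.isPreconnected (z₀ := 2) (by simp) ?_ hs
  have : {s : ℂ | 1 < s.re} ∈ 𝓝 (2:ℂ) :=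
    (isOpen_lt continuous_const Complex.continuous_re).mem_nhds (by simp)
  filter_upwards [this] with z hz using zf_formula_one z hz

lemma zf_growth (s : ℂ) (h1 : 1/10 ≤ s.re) (h2 : s.re ≤ 4) : ‖zf s‖ ≤ 50 * (|s.im| + 3) ^ 2 := by
  rw [zf_formula s (by linarith)]
  have hb := mel_bound s (by linarith)
  have hb2 : 1 / s.re ≤ 10 := by
    rw [div_le_iff₀ (by linarith)]; linarith
  have n1 : ‖s‖ ≤ 4 + |s.im| := by
    have := Complex.norm_le_abs_re_add_abs_im s
    rw [abs_of_pos (by linarith : 0 < s.re)] at this; linarith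
  have n2 : ‖s - 1‖ ≤ 4 + |s.im| := by
    have := Complex.norm_le_abs_re_add_abs_im (s - 1)
    have h : |(s-1).re| ≤ 4 := by rw [abs_le]; constructor <;> simp <;> linarith
    have h' : (s-1).im = s.im := by simp
    rw [h'] at this; linarith
  have h0 := abs_nonneg s.im
  calc _ ≤ ‖s‖ + ‖s‖ * ‖s - 1‖ * ‖mellin gfr (-s)‖ := by
        refine (norm_sub_le _ _).trans ?_
        rw [norm_mul, norm_mul]
    _ ≤ (4 + |s.im|) + (4 + |s.im|) * (4 + |s.im|) * 10 := by
        gcongr; exact hb.trans hb2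
    _ ≤ _ := by nlinarith

lemma zf_lower (t : ℝ) : 3/10 ≤ ‖zf (2 + t * Complex.I)‖ := by
  set s : ℂ := 2 + t * Complex.I with hs
  have hre : s.re = 2 := by simp [hs]
  have hs1 : s ≠ 1 := by intro h; rw [h] at hre; norm_num at hre
  rw [zf_ne hs1, norm_mul]
  have n1 : 1 ≤ ‖s - 1‖ := by
    have := Complex.abs_re_le_norm (s - 1)
    simp [hre] at this; norm_num at this; exact this
  have n2 : 3/10 ≤ ‖riemannZeta s‖ := by
    rw [zeta_eq_tsum_one_div_nat_add_one_cpow (by rw [hre]; norm_num)]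
    have hn : ∀ n : ℕ, ‖1 / ((n:ℂ) + 1) ^ s‖ = 1 / ((n:ℝ) + 1) ^ 2 := by
      intro n
      rw [norm_div, norm_one]
      have : ((n:ℂ) + 1) = (((n:ℝ) + 1 : ℝ) : ℂ) := by push_cast; rfl
      rw [this, Complex.norm_cpow_eq_rpow_re_of_pos (by positivity), hre]
      norm_num
    have hsum2 : HasSum (fun n : ℕ => 1 / ((n:ℝ) + 1) ^ 2) (π ^ 2 / 6) := by
      have := (hasSum_nat_add_iff' (f := fun n : ℕ => 1 / (n:ℝ)^2) 1).2 hasSum_zeta_two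
      simpa using this
    have hsm : Summable (fun n : ℕ => 1 / ((n:ℂ) + 1) ^ s) := by
      refine Summable.of_norm ?_
      simp only [hn]; exact hsum2.summable
    rw [hsm.tsum_eq_zero_add]
    have h1 : (1:ℂ) / (((0:ℕ):ℂ) + 1) ^ s = 1 := by simp
    rw [h1]
    have hs3 : HasSum (fun n : ℕ => 1 / (((n + 1 : ℕ):ℝ) + 1) ^ 2) (π ^ 2 / 6 - 1) := by
      have := (hasSum_nat_add_iff' (f := fun n : ℕ => 1 / ((n:ℝ)+1)^2) 1).2 hsum2
      simpa using this
    have h2 : ‖∑' n : ℕ, 1 / (((n + 1 : ℕ):ℂ) + 1) ^ s‖ ≤ π ^ 2 / 6 - 1 :=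
      tsum_of_norm_bounded hs3 fun n => (hn (n+1)).le
    have h3 := norm_sub_le_norm_add (1:ℂ) (∑' n : ℕ, 1 / (((n + 1 : ℕ):ℂ) + 1) ^ s)
    rw [norm_one] at h3
    have := Real.pi_lt_d2
    have := Real.pi_pos
    nlinarith
  nlinarith [norm_nonneg (riemannZeta s)]

end SV


namespace SV
open scoped Topology
open Filter Metric

lemma factor (f : ℂ → ℂ) (hf : Differentiable ℂ f) (hne : ∀ z, analyticOrderAt f z ≠ ⊤) (S : Finset ℂ) :
    ∃ g : ℂ → ℂ, Differentiable ℂ g ∧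
      (∀ z, f z = (∏ ρ ∈ S, (z - ρ) ^ (analyticOrderNatAt f ρ)) * g z) ∧ ∀ ρ ∈ S, g ρ ≠ 0 := by
  induction S using Finset.induction_on with
  | empty => exact ⟨f, hf, by simp, by simp⟩
  | insert a S ha ih =>
    obtain ⟨g, hg, hfg, hg0⟩ := ih
    obtain ⟨h, han, hh0, hev⟩ := ((hf.analyticAt a).analyticOrderAt_ne_top).1 (hne a)
    set m := analyticOrderNatAt f with hm
    set P : ℂ → ℂ := fun z => ∏ ρ ∈ S, (z - ρ) ^ (m ρ) with hP
    have hPd : Differentiable ℂ P := by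
      rw [hP]; fun_prop
    have hPa : P a ≠ 0 := by
      rw [hP]
      refine Finset.prod_ne_zero_iff.2 fun ρ hρ => pow_ne_zero _ (sub_ne_zero.2 ?_)
      rintro rfl; exact ha hρ
    have hPev : ∀ᶠ z in 𝓝 a, P z ≠ 0 := hPd.continuous.continuousAt.eventually_ne hPa
    set G : ℂ → ℂ := Function.update (fun z => g z / (z - a) ^ (m a)) a (h a / P a) with hG
    have hGne : ∀ z, z ≠ a → G z = g z / (z - a) ^ (m a) := fun z hz => Function.update_of_ne hz _ _
    have hGa : G a = h a / P a := Function.update_self _ _ _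
    have hgev : ∀ᶠ z in 𝓝 a, g z = (z - a) ^ (m a) * (h z / P z) := by
      filter_upwards [hev, hPev] with z h1 h2
      have := hfg z
      rw [h1] at this
      have h3 : (∏ ρ ∈ S, (z - ρ) ^ (m ρ)) = P z := rfl
      rw [h3, smul_eq_mul] at this
      field_simp
      rw [this]; ring
    refine ⟨G, ?_, ?_, ?_⟩
    · intro z
      by_cases hz : z = a
      · subst hz
        have hd : DifferentiableAt ℂ (fun w => h w / P w) z := han.differentiableAt.div (hPd z) hPa
        refine hd.congr_of_eventuallyEq ?_
        filter_upwards [hgev] with w hw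
        by_cases hwz : w = z
        · subst hwz; exact hGa
        · rw [hGne w hwz, hw]
          have : (w - z) ^ (m z) ≠ 0 := pow_ne_zero _ (sub_ne_zero.2 hwz)
          field_simp
      · have h1 : DifferentiableAt ℂ (fun w => g w / (w - a) ^ (m a)) z :=
          (hg z).div (by fun_prop) (pow_ne_zero _ (sub_ne_zero.2 hz))
        refine h1.congr_of_eventuallyEq ?_
        filter_upwards [isOpen_ne.mem_nhds hz] with w hw using hGne w hw
    · intro z
      rw [Finset.prod_insert ha, hfg z]
      by_cases hz : z = a
      · subst hz
        rw [hgev.self_of_nhds, hGa]; ring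
      · rw [hGne z hz]
        have : (z - a) ^ (m a) ≠ 0 := pow_ne_zero _ (sub_ne_zero.2 hz)
        field_simp
    · intro ρ hρ
      by_cases hz : ρ = a
      · subst hz; rw [hGa]; exact div_ne_zero hh0 hPa
      · rw [hGne ρ hz]
        exact div_ne_zero (hg0 ρ (Finset.mem_of_mem_insert_of_ne hρ hz)) (pow_ne_zero _ (sub_ne_zero.2 hz))

lemma max_mod (h : ℂ → ℂ) (hd : Differentiable ℂ h) (c : ℂ) (R M : ℝ) (hR : 0 < R)
    (hb : ∀ z, dist z c = R → ‖h z‖ ≤ M) (z : ℂ) (hz : dist z c ≤ R) : ‖h z‖ ≤ M := by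
  refine Complex.norm_le_of_forall_mem_frontier_norm_le (U := ball c R) isBounded_ball hd.diffContOnCl ?_ ?_
  · intro w hw
    rw [frontier_ball c hR.ne'] at hw
    exact hb w (mem_sphere.1 hw)
  · rw [closure_ball c hR.ne']; exact mem_closedBall.2 hz

lemma blaschke_norm (R : ℝ) (hR : 0 < R) (a z : ℂ) (hz : ‖z‖ = R) :
    ‖((R:ℂ) ^ 2 - (starRingEnd ℂ) a * z) / R‖ = ‖z - a‖ := by
  have h1 : (R:ℂ) ^ 2 = (starRingEnd ℂ) z * z := by rw [Complex.conj_mul', hz]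
  rw [h1, ← sub_mul, ← map_sub, norm_div, norm_mul, RCLike.norm_conj, hz, Complex.norm_real, Real.norm_of_nonneg hR.le]
  field_simp

lemma local_zeros (f : ℂ → ℂ) (hf : Differentiable ℂ f) (hne : ∀ z, analyticOrderAt f z ≠ ⊤)
    (c : ℂ) (M : ℝ) (hM : ∀ z, dist z c = 9/5 → ‖f z‖ ≤ M) (hfc : f c ≠ 0)
    (S : Finset ℂ) (hS : ∀ ρ, ρ ∈ S ↔ dist ρ c ≤ 8/5 ∧ f ρ = 0) :
    ((∑ ρ ∈ S, analyticOrderNatAt f ρ : ℕ) : ℝ) ≤ 9 * Real.log (M / ‖f c‖) ∧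
    ∀ z, dist z c ≤ 3/2 → f z ≠ 0 →
      ‖deriv f z / f z - ∑ ρ ∈ S, (analyticOrderNatAt f ρ : ℂ) / (z - ρ)‖ ≤
        1240 * (28 * Real.log (M / ‖f c‖) + 1) := by
  obtain ⟨g, hg, hfg, hg0⟩ := factor f hf hne S
  set m := analyticOrderNatAt f with hm
  set N : ℕ := ∑ ρ ∈ S, m ρ with hN
  set A := Real.log (M / ‖f c‖) with hA
  have hfc' : 0 < ‖f c‖ := norm_pos_iff.2 hfc
  have hMpos : 0 < M := hfc'.trans_le (max_mod f hf c (9/5) M (by norm_num) hM c (by simp; norm_num))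
  have hexpA : Real.exp A = M / ‖f c‖ := Real.exp_log (by positivity)
  -- product bounds
  have hprod_le : ‖∏ ρ ∈ S, (c - ρ) ^ (m ρ)‖ ≤ (8/5) ^ N := by
    rw [norm_prod, hN, ← Finset.prod_pow_eq_pow_sum]
    refine Finset.prod_le_prod (fun _ _ => norm_nonneg _) fun ρ hρ => ?_
    rw [norm_pow]
    have := ((hS ρ).1 hρ).1
    rw [dist_comm, dist_eq_norm] at this
    gcongr
  have hgc : ‖f c‖ ≤ (8/5) ^ N * ‖g c‖ := by
    rw [hfg c, norm_mul]; gcongr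
  have hgcp : 0 < ‖g c‖ := by
    by_contra h
    have : ‖g c‖ = 0 := le_antisymm (not_lt.1 h) (norm_nonneg _)
    rw [this, mul_zero] at hgc; linarith
  -- Blaschke
  set h : ℂ → ℂ := fun z => (∏ ρ ∈ S, ((((9/5 : ℝ):ℂ) ^ 2 - (starRingEnd ℂ) (ρ - c) * (z - c)) / ((9/5:ℝ):ℂ)) ^ (m ρ)) * g z with hh
  have hhd : Differentiable ℂ h := by
    rw [hh]
    refine Differentiable.mul ?_ hg
    fun_prop
  have hhb : ∀ z, dist z c = 9/5 → ‖h z‖ ≤ M := by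
    intro z hz
    have : ‖h z‖ = ‖f z‖ := by
      rw [hh, hfg z]
      simp only [norm_mul, norm_prod, norm_pow]
      congr 1
      refine Finset.prod_congr rfl fun ρ _ => ?_
      rw [blaschke_norm (9/5) (by norm_num) (ρ - c) (z - c) (by rw [← dist_eq_norm]; exact hz)]
      congr 2; ring
    rw [this]; exact hM z hz
  have hhc := max_mod h hhd c (9/5) M (by norm_num) hhb c (by simp; norm_num)
  have hhc' : ‖h c‖ = (9/5) ^ N * ‖g c‖ := by
    rw [hh]
    simp only [norm_mul, norm_prod, norm_pow, sub_self, mul_zero, sub_zero]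
    rw [hN, ← Finset.prod_pow_eq_pow_sum]
    congr 1
    refine Finset.prod_congr rfl fun ρ _ => ?_
    congr 1
    rw [← Complex.ofReal_pow, ← Complex.ofReal_div, Complex.norm_real]
    norm_num
  have hcount : (9/8 : ℝ) ^ N ≤ M / ‖f c‖ := by
    rw [le_div_iff₀ hfc']
    calc (9/8 : ℝ) ^ N * ‖f c‖ ≤ (9/8 : ℝ) ^ N * ((8/5) ^ N * ‖g c‖) := by gcongr
      _ = (9/5) ^ N * ‖g c‖ := by rw [← mul_assoc, ← mul_pow]; norm_num
      _ ≤ M := by rw [← hhc']; exact hhc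
  have hNA : (N : ℝ) ≤ 9 * A := by
    have h1 := Real.log_le_log (by positivity) hcount
    rw [Real.log_pow] at h1
    have h2 : (1/9 : ℝ) ≤ Real.log (9/8) := by
      have := Real.one_sub_inv_le_log_of_pos (x := 9/8) (by norm_num)
      norm_num at this ⊢; linarith
    have h3 : (N:ℝ) * (1/9) ≤ N * Real.log (9/8) := by gcongr
    linarith
  refine ⟨hNA, ?_⟩
  -- growth of g
  have hgb : ∀ z, dist z c = 9/5 → ‖g z‖ ≤ M * 5 ^ N := by
    intro z hz
    have h1 := hM z hz
    have h2 : (1/5 : ℝ) ^ N ≤ ‖∏ ρ ∈ S, (z - ρ) ^ (m ρ)‖ := by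
      rw [norm_prod, hN, ← Finset.prod_pow_eq_pow_sum]
      refine Finset.prod_le_prod (fun _ _ => by positivity) fun ρ hρ => ?_
      rw [norm_pow]
      have h3 := ((hS ρ).1 hρ).1
      have h4 := dist_triangle z ρ c
      have h5 : 1/5 ≤ ‖z - ρ‖ := by rw [← dist_eq_norm]; linarith
      gcongr
    rw [hfg z, norm_mul] at h1
    have h3 : (1/5 : ℝ) ^ N * ‖g z‖ ≤ M := (mul_le_mul_of_nonneg_right h2 (norm_nonneg _)).trans h1
    calc ‖g z‖ = ((1/5 : ℝ) ^ N * ‖g z‖) * 5 ^ N := by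
          rw [mul_right_comm, ← mul_pow]; norm_num
      _ ≤ _ := by gcongr
  have hgB : ∀ z, dist z c ≤ 9/5 → ‖g z‖ / ‖g c‖ ≤ Real.exp (28 * A + 1) := by
    intro z hz
    have h1 := max_mod g hg c (9/5) _ (by norm_num) hgb z hz
    rw [div_le_iff₀ hgcp]
    have h8 : (8:ℝ) ^ N ≤ Real.exp (27 * A + 1) := by
      have : (8:ℝ) ≤ Real.exp 3 := by
        have := Real.exp_one_gt_d9
        have h : Real.exp 3 = Real.exp 1 ^ 3 := by rw [← Real.exp_nat_mul]; norm_num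
        rw [h]
        calc (8:ℝ) = 2 ^ 3 := by norm_num
          _ ≤ _ := by gcongr; linarith
      calc (8:ℝ) ^ N ≤ (Real.exp 3) ^ N := by gcongr
        _ = Real.exp (N * 3) := by rw [← Real.exp_nat_mul]
        _ ≤ _ := by gcongr; linarith
    calc ‖g z‖ ≤ M * 5 ^ N := h1
      _ = (M / ‖f c‖) * 5 ^ N * ‖f c‖ := by field_simp
      _ ≤ (M / ‖f c‖) * 5 ^ N * ((8/5) ^ N * ‖g c‖) := by gcongr
      _ = (M / ‖f c‖) * 8 ^ N * ‖g c‖ := by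
          have : (8:ℝ) ^ N = 5 ^ N * (8/5) ^ N := by rw [← mul_pow]; norm_num
          rw [this]; ring
      _ ≤ Real.exp A * Real.exp (27 * A + 1) * ‖g c‖ := by rw [hexpA]; gcongr
      _ = _ := by rw [← Real.exp_add]; congr 2; ring
  have hgnz : ∀ z ∈ ball c (8/5), g z ≠ 0 := by
    intro z hz h0
    have h1 : f z = 0 := by rw [hfg z, h0, mul_zero]
    exact hg0 z ((hS z).2 ⟨(mem_ball.1 hz).le, h1⟩) h0
  have hgd : Differentiable ℂ (deriv g) := by
    intro z
    exact ((hg.analyticAt z).deriv).differentiableAt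
  obtain ⟨L0, hL0⟩ := (DifferentiableOn.isExactOn_ball (f := fun z => deriv g z / g z) (c := c) (r := 8/5)
    (fun z hz => ((hgd z).div (hg z) (hgnz z hz)).differentiableWithinAt))
  set L : ℂ → ℂ := fun z => L0 z - L0 c with hL
  have hLd : ∀ z ∈ ball c (8/5), HasDerivAt L (deriv g z / g z) z := fun z hz => (hL0 z hz).sub_const _
  have hLexp : ∀ z ∈ ball c (8/5), g z = g c * Complex.exp (L z) := by
    have hc : c ∈ ball c (8/5 : ℝ) := mem_ball_self (by norm_num)
    have hder : ∀ z ∈ ball c (8/5 : ℝ), HasDerivAt (fun z => g z * Complex.exp (-L z)) 0 z := by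
      intro z hz
      have h1 := (hg z).hasDerivAt.mul ((hLd z hz).neg.cexp)
      refine h1.congr_deriv ?_
      have := hgnz z hz
      field_simp
      ring
    intro z hz
    have h2 := (convex_ball c (8/5 : ℝ)).is_const_of_fderivWithin_eq_zero (𝕜 := ℂ) (f := fun z => g z * Complex.exp (-L z))
      (fun w hw => (hder w hw).differentiableAt.differentiableWithinAt)
      (fun w hw => by
        rw [fderivWithin_of_isOpen isOpen_ball hw]
        ext; simp [(hder w hw).hasFDerivAt.fderiv]) hz hc
    simp only [hL, sub_self, neg_zero, Complex.exp_zero, mul_one] at h2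
    rw [← h2, hL, mul_assoc, ← Complex.exp_add]; simp
  have hA0 : 0 ≤ A := by
    have : (0:ℝ) ≤ N := Nat.cast_nonneg N
    linarith
  have hLre : ∀ z ∈ ball c (8/5), (L z).re ≤ 28 * A + 1 := by
    intro z hz
    have h1 := hgB z ((mem_ball.1 hz).le.trans (by norm_num))
    rw [hLexp z hz, norm_mul, mul_div_assoc, mul_comm, div_mul_cancel₀ _ hgcp.ne', Complex.norm_exp] at h1
    exact Real.exp_le_exp.1 h1
  have hLb : ∀ z, dist z c ≤ 31/20 → ‖L z‖ ≤ 62 * (28 * A + 1) := by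
    intro z hz
    have h1 := Complex.borelCaratheodory_zero (f := fun w => L (c + w)) (M := 28 * A + 1) (R := 8/5) (z := z - c) (by positivity)
      (by
        intro w hw
        have hw' : c + w ∈ ball c (8/5 : ℝ) := by
          rw [mem_ball, dist_eq_norm]; simpa using hw
        exact (DifferentiableAt.comp (g := L) (f := fun w => c + w) w (hLd _ hw').differentiableAt (by fun_prop)).differentiableWithinAt)
      (by
        intro w hw
        exact hLre _ (by rw [mem_ball, dist_eq_norm]; simpa using hw)) (by norm_num)
      (by rw [mem_ball, dist_zero_right, ← dist_eq_norm]; linarith) (by simp [hL])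
    simp only [add_sub_cancel] at h1
    rw [← dist_eq_norm z c] at h1
    refine h1.trans ?_
    rw [div_le_iff₀ (by linarith)]
    have : 0 ≤ 28 * A + 1 := by positivity
    nlinarith
  intro z hz hfz
  have hzb : z ∈ ball c (8/5 : ℝ) := by rw [mem_ball]; linarith
  have hgz := hgnz z hzb
  have hld : deriv f z / f z - ∑ ρ ∈ S, (m ρ : ℂ) / (z - ρ) = deriv g z / g z := by
    have hzρ : ∀ ρ ∈ S, z - ρ ≠ 0 := by
      intro ρ hρ h0
      rw [sub_eq_zero.1 h0] at hfz
      exact hfz ((hS ρ).1 hρ).2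
    have hfe : f = fun z => (∏ ρ ∈ S, (z - ρ) ^ (m ρ)) * g z := funext hfg
    have e1 : logDeriv f z = logDeriv (fun z => ∏ ρ ∈ S, (z - ρ) ^ (m ρ)) z + logDeriv g z := by
      conv_lhs => rw [hfe]
      exact logDeriv_mul z (Finset.prod_ne_zero_iff.2 fun ρ hρ => pow_ne_zero _ (hzρ ρ hρ)) hgz (by fun_prop) (hg z)
    have e2 : logDeriv (fun z => ∏ ρ ∈ S, (z - ρ) ^ (m ρ)) z = ∑ ρ ∈ S, (m ρ : ℂ) / (z - ρ) := by
      have := logDeriv_prod (s := S) (f := fun ρ z => (z - ρ) ^ (m ρ)) (x := z) (fun ρ hρ => pow_ne_zero _ (hzρ ρ hρ)) (fun ρ _ => by fun_prop)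
      rw [this]
      refine Finset.sum_congr rfl fun ρ hρ => ?_
      rw [logDeriv_fun_pow (by fun_prop)]
      simp [logDeriv, div_eq_mul_inv]
    rw [e2] at e1
    simp only [logDeriv, Pi.div_apply] at e1
    rw [e1]; ring
  rw [hld, ← (hLd z hzb).deriv]
  have hball : ∀ w, dist w z ≤ 1/20 → dist w c ≤ 31/20 := fun w hw => by
    have := dist_triangle w z c; linarith
  have := Complex.norm_deriv_le_of_forall_mem_sphere_norm_le (c := z) (R := 1/20) (C := 62 * (28 * A + 1)) (f := L) (by norm_num)
    (by
      refine DifferentiableOn.diffContOnCl ?_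
      rw [closure_ball _ (by norm_num)]
      intro w hw
      refine (hLd w ?_).differentiableAt.differentiableWithinAt
      have := hball w (mem_closedBall.1 hw)
      rw [mem_ball]; linarith)
    (fun w hw => hLb w (hball w (mem_sphere.1 hw).le))
  refine this.trans (le_of_eq ?_)
  ring

end SV


namespace SV
open scoped Topology
open Filter Metric

noncomputable def ell (t : ℝ) : ℝ := Real.log (|t| + 3)
noncomputable def mz (ρ : ℂ) : ℕ := analyticOrderNatAt zf ρ

lemma ell_one (t : ℝ) : 1 ≤ ell t := by
  unfold ell
  rw [Real.le_log_iff_exp_le (by positivity)]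
  have := Real.exp_one_lt_d9
  have := abs_nonneg t
  linarith

lemma ell_pos (t : ℝ) : 0 < ell t := by linarith [ell_one t]

lemma ell_cont : Continuous ell := by
  unfold ell
  exact Continuous.log (by fun_prop) fun t => by positivity

lemma ell_add (a b : ℝ) : ell (a + b) ≤ 2 * ell a * ell b := by
  have h1 := ell_one a
  have h2 := ell_one b
  have h : ell (a + b) ≤ ell a + ell b := by
    unfold ell
    rw [← Real.log_mul (by positivity) (by positivity)]
    refine Real.log_le_log (by positivity) ?_
    have := abs_add_le a b
    have := abs_nonneg a
    have := abs_nonneg b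
    nlinarith [mul_nonneg (abs_nonneg a) (abs_nonneg b)]
  nlinarith

lemma zf_order (z : ℂ) : analyticOrderAt zf z ≠ ⊤ := by
  intro h
  rw [analyticOrderAt_eq_top] at h
  have h1 : AnalyticOnNhd ℂ zf Set.univ := fun z _ => zf_diff.analyticAt z
  have := h1.eqOn_zero_of_preconnected_of_eventuallyEq_zero isPreconnected_univ (Set.mem_univ z) h (Set.mem_univ 1)
  rw [zf_one] at this
  simp at this

lemma zf_zero_zeta {s : ℂ} (h : zf s = 0) : riemannZeta s = 0 ∧ s ≠ 1 := by
  have hs : s ≠ 1 := by rintro rfl; rw [zf_one] at h; simp at h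
  rw [zf_ne hs] at h
  rcases mul_eq_zero.1 h with h | h
  · exact absurd (sub_eq_zero.1 h) hs
  · exact ⟨h, hs⟩

lemma zf_RH (hRH : RiemannHypothesis) {s : ℂ} (h : zf s = 0) (hs : 0 < s.re) : s.re = 1/2 := by
  obtain ⟨h1, h2⟩ := zf_zero_zeta h
  refine hRH s h1 ?_ h2
  rintro ⟨n, rfl⟩
  simp at hs
  have : (0:ℝ) ≤ n := Nat.cast_nonneg n
  linarith

lemma zf_fin (c : ℂ) (R : ℝ) : {ρ : ℂ | dist ρ c ≤ R ∧ zf ρ = 0}.Finite := by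
  refine ((isCompact_closedBall c R).inter_riemannZetaZeros_finite).subset ?_
  rintro ρ ⟨h1, h2⟩
  exact ⟨mem_closedBall.2 h1, mem_riemannZetaZeros.2 (zf_zero_zeta h2).1⟩

noncomputable def St (t : ℝ) : Finset ℂ := (zf_fin (2 + t * Complex.I) (8/5)).toFinset

lemma mem_St (t : ℝ) (ρ : ℂ) : ρ ∈ St t ↔ dist ρ (2 + t * Complex.I) ≤ 8/5 ∧ zf ρ = 0 := by
  simp [St]

lemma St_bounds (t : ℝ) : ((∑ ρ ∈ St t, mz ρ : ℕ) : ℝ) ≤ 81 * ell t ∧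
    ∀ z, dist z (2 + t * Complex.I) ≤ 3/2 → zf z ≠ 0 →
      ‖deriv zf z / zf z - ∑ ρ ∈ St t, (mz ρ : ℂ) / (z - ρ)‖ ≤ 400000 * ell t := by
  have ht := abs_nonneg t
  have hlow := zf_lower t
  have hc : zf (2 + t * Complex.I) ≠ 0 := by
    intro h; rw [h] at hlow; norm_num at hlow
  have h := local_zeros zf zf_diff zf_order (2 + t * Complex.I) (50 * (|t| + 5) ^ 2) (by
    intro z hz
    have h1 := Complex.abs_re_le_norm (z - (2 + t * Complex.I))
    have h2 := Complex.abs_im_le_norm (z - (2 + t * Complex.I))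
    rw [← dist_eq_norm, hz] at h1 h2
    simp only [Complex.sub_re, Complex.add_re, Complex.mul_re, Complex.sub_im, Complex.add_im, Complex.mul_im,
      Complex.re_ofNat, Complex.im_ofNat, Complex.ofReal_re, Complex.ofReal_im, Complex.I_re, Complex.I_im] at h1 h2
    rw [abs_le] at h1
    refine (zf_growth z (by linarith) (by linarith)).trans ?_
    have h3 : |z.im| ≤ |t| + 9/5 := by
      have := abs_add_le (z.im - t) t
      have h4 : z.im - t + t = z.im := by ring
      rw [h4] at this
      have h5 : z.im - (0 + (t * 1 + 0 * 0)) = z.im - t := by ring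
      rw [h5] at h2; linarith
    have := abs_nonneg z.im
    have h6 : |z.im| + 3 ≤ |t| + 5 := by linarith
    have := pow_le_pow_left₀ (by positivity) h6 2
    linarith) hc (St t) (mem_St t)
  have hA : Real.log (50 * (|t| + 5) ^ 2 / ‖zf (2 + t * Complex.I)‖) ≤ 9 * ell t := by
    have : 9 * ell t = Real.log ((|t| + 3) ^ 9) := by rw [Real.log_pow]; rfl
    rw [this]
    refine Real.log_le_log (by positivity) ?_
    rw [div_le_iff₀ (by linarith)]
    have h1 : (|t| + 5) ≤ (|t| + 3) ^ 2 := by nlinarith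
    have h2 : (243 : ℝ) ≤ (|t| + 3) ^ 5 := by
      calc (243:ℝ) = 3 ^ 5 := by norm_num
        _ ≤ _ := by gcongr; linarith
    calc 50 * (|t| + 5) ^ 2 ≤ 50 * ((|t| + 3) ^ 2) ^ 2 := by gcongr
      _ ≤ 243 * (3/10) * ((|t| + 3) ^ 2) ^ 2 := by gcongr; norm_num
      _ ≤ (|t| + 3) ^ 5 * ‖zf (2 + t * Complex.I)‖ * ((|t| + 3) ^ 2) ^ 2 := by gcongr
      _ = _ := by ring
  have he := ell_one t
  refine ⟨?_, fun z hz hz0 => ?_⟩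
  · exact h.1.trans (by linarith)
  · exact (h.2 z hz hz0).trans (by nlinarith)

/-- local count for finsets of zeros on the critical line -/
lemma count (S : Finset ℂ) (hS : ∀ ρ ∈ S, zf ρ = 0 ∧ ρ.re = 1/2) (t : ℝ) :
    ∑ ρ ∈ S, (mz ρ : ℝ) * (Set.Icc (ρ.im - 1/2) (ρ.im + 1/2)).indicator (fun _ => (1:ℝ)) t ≤ 81 * ell t := by
  refine le_trans ?_ (St_bounds t).1
  push_cast
  classical
  have : ∑ ρ ∈ S, (mz ρ : ℝ) * (Set.Icc (ρ.im - 1/2) (ρ.im + 1/2)).indicator (fun _ => (1:ℝ)) t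
      = ∑ ρ ∈ S with t ∈ Set.Icc (ρ.im - 1/2) (ρ.im + 1/2), (mz ρ : ℝ) := by
    rw [Finset.sum_filter]
    refine Finset.sum_congr rfl fun ρ _ => ?_
    by_cases h : t ∈ Set.Icc (ρ.im - 1/2) (ρ.im + 1/2)
    · rw [Set.indicator_of_mem h, if_pos h, mul_one]
    · rw [Set.indicator_of_notMem h, if_neg h, mul_zero]
  rw [this]
  refine Finset.sum_le_sum_of_subset_of_nonneg ?_ fun _ _ _ => Nat.cast_nonneg _
  intro ρ hρ
  rw [Finset.mem_filter] at hρ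
  rw [mem_St]
  obtain ⟨h1, h2⟩ := hS ρ hρ.1
  refine ⟨?_, h1⟩
  rw [dist_eq_norm, Complex.norm_eq_sqrt_sq_add_sq]
  refine Real.sqrt_le_iff.2 ⟨by norm_num, ?_⟩
  have h3 := hρ.2
  simp [h2]
  rw [Set.mem_Icc] at h3
  nlinarith

lemma transfer (S : Finset ℂ) (hS : ∀ ρ ∈ S, zf ρ = 0 ∧ ρ.re = 1/2) (G : ℝ → ℝ) (hG0 : ∀ t, 0 ≤ G t)
    (hGc : Continuous G) (hGi : Integrable (fun t => G t * ell t)) (g : ℂ → ℝ)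
    (hg : ∀ ρ ∈ S, ∀ t, |t - ρ.im| ≤ 1/2 → g ρ ≤ G t) :
    ∑ ρ ∈ S, (mz ρ : ℝ) * g ρ ≤ 81 * ∫ t, G t * ell t := by
  have hind : ∀ ρ : ℂ, Integrable ((Set.Icc (ρ.im - 1/2) (ρ.im + 1/2)).indicator G) := fun ρ =>
    (integrable_indicator_iff measurableSet_Icc).2 hGc.continuousOn.integrableOn_Icc
  calc ∑ ρ ∈ S, (mz ρ : ℝ) * g ρ
      ≤ ∑ ρ ∈ S, (mz ρ : ℝ) * ∫ t, (Set.Icc (ρ.im - 1/2) (ρ.im + 1/2)).indicator G t := by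
        refine Finset.sum_le_sum fun ρ hρ => mul_le_mul_of_nonneg_left ?_ (Nat.cast_nonneg _)
        rw [integral_indicator measurableSet_Icc]
        have h1 : ∫ t in Set.Icc (ρ.im - 1/2) (ρ.im + 1/2), g ρ = g ρ := by
          simp; rw [show (2⁻¹ + 2⁻¹ : ℝ) = 1 by norm_num, one_mul]
        rw [← h1]
        refine setIntegral_mono_on (integrableOn_const (by simp)) hGc.continuousOn.integrableOn_Icc measurableSet_Icc ?_
        intro t ht
        refine hg ρ hρ t ?_
        rw [abs_le]; constructor <;> linarith [ht.1, ht.2]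
    _ = ∫ t, ∑ ρ ∈ S, (mz ρ : ℝ) * (Set.Icc (ρ.im - 1/2) (ρ.im + 1/2)).indicator G t := by
        rw [integral_finsetSum _ fun ρ _ => (hind ρ).const_mul _]
        simp only [integral_const_mul]
    _ ≤ ∫ t, 81 * (G t * ell t) := by
        refine integral_mono (integrable_finsetSum _ fun ρ _ => (hind ρ).const_mul _) (hGi.const_mul _) fun t => ?_
        have h := mul_le_mul_of_nonneg_left (count S hS t) (hG0 t)
        rw [Finset.mul_sum] at h
        refine le_trans (Finset.sum_le_sum fun ρ _ => ?_) (h.trans (le_of_eq (by ring)))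
        by_cases ht : t ∈ Set.Icc (ρ.im - 1/2) (ρ.im + 1/2)
        · rw [Set.indicator_of_mem ht, Set.indicator_of_mem ht]; apply le_of_eq; ring
        · rw [Set.indicator_of_notMem ht, Set.indicator_of_notMem ht]; simp
    _ = _ := integral_const_mul _ _

noncomputable def kap (x : ℝ) : ℝ := 1 / (1 + x ^ 2)
noncomputable def ww (δ t : ℝ) : ℝ := δ / (1 + δ * |t|)

lemma kap_pos (x : ℝ) : 0 < kap x := by unfold kap; positivity
lemma kap_le_one (x : ℝ) : kap x ≤ 1 := by
  unfold kap; rw [div_le_one (by positivity)]; nlinarith [sq_nonneg x]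
lemma kap_cont : Continuous kap := by
  unfold kap
  exact Continuous.div (by fun_prop) (by fun_prop) fun x => by positivity
lemma kap_near (x y : ℝ) (h : |x - y| ≤ 1) : kap x ≤ 3 * kap y := by
  unfold kap
  rw [div_le_iff₀ (by positivity), mul_one_div, div_mul_eq_mul_div, le_div_iff₀ (by positivity)]
  have : (x-y)^2 ≤ 1 := by rw [sq_le_one_iff_abs_le_one]; exact h
  nlinarith [sq_nonneg (2 * x - y)]

lemma ww_pos {δ : ℝ} (hδ : 0 < δ) (t : ℝ) : 0 < ww δ t := by unfold ww; positivity
lemma ww_cont {δ : ℝ} (hδ : 0 < δ) : Continuous (ww δ) := by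
  unfold ww
  exact Continuous.div (by fun_prop) (by fun_prop) fun x => by positivity
lemma ww_near {δ : ℝ} (hδ : 0 < δ) (h1 : δ ≤ 1) (s t : ℝ) (h : |s - t| ≤ 1) : ww δ s ≤ 2 * ww δ t := by
  unfold ww
  rw [mul_div_assoc', div_le_div_iff₀ (by positivity) (by positivity)]
  have h2 : |t| ≤ |s| + 1 := by
    have := abs_sub_abs_le_abs_sub t s
    rw [abs_sub_comm] at this; linarith
  have h3 : δ * |t| ≤ δ * |s| + 1 := by nlinarith
  have h4 : 0 ≤ δ * |s| := by positivity
  nlinarith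
lemma ww_le {δ : ℝ} (hδ : 0 < δ) (h1 : δ ≤ 1) (t : ℝ) : ww δ t ≤ 1 / (1 + |t|) := by
  unfold ww
  rw [div_le_div_iff₀ (by positivity) (by positivity)]
  have := abs_nonneg t
  nlinarith

lemma ell_near (s t : ℝ) (h : |s - t| ≤ 1) : ell s ≤ 2 * ell t := by
  have : ell s ≤ Real.log ((|t| + 3) ^ 2) := by
    unfold ell
    refine Real.log_le_log (by positivity) ?_
    have h2 : |s| ≤ |t| + 1 := by
      have := abs_sub_abs_le_abs_sub s t; linarith
    have := abs_nonneg t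
    nlinarith
  rw [Real.log_pow] at this
  exact_mod_cast this

lemma J0_int : Integrable (fun v : ℝ => ell v ^ 2 / (1 + |v|) ^ 2) := by
  have h := (integrable_one_add_norm (E := ℝ) (μ := volume) (r := 3/2) (by simp; norm_num)).const_mul 48
  refine h.mono' ?_ (Eventually.of_forall fun v => ?_)
  · refine (Continuous.div (ell_cont.pow 2) (by fun_prop) fun v => by positivity).aestronglyMeasurable
  · have hv := abs_nonneg v
    rw [Real.norm_of_nonneg (by positivity), Real.norm_eq_abs]
    have h1 : ell v ≤ (|v| + 3) ^ (1/4 : ℝ) / (1/4) := Real.log_le_rpow_div (by positivity) (by norm_num)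
    have h2 : ell v ^ 2 ≤ 48 * (1 + |v|) ^ (1/2 : ℝ) := by
      calc ell v ^ 2 ≤ ((|v| + 3) ^ (1/4 : ℝ) / (1/4)) ^ 2 := by
            have := ell_pos v
            gcongr
        _ = 16 * (|v| + 3) ^ (1/2 : ℝ) := by
            have : (|v| + 3) ^ (1/2 : ℝ) = ((|v| + 3) ^ (1/4 : ℝ)) ^ 2 := by
              rw [← Real.rpow_natCast, ← Real.rpow_mul (by positivity)]; norm_num
            rw [this]; ring
        _ ≤ 16 * (9 * (1 + |v|)) ^ (1/2 : ℝ) := by gcongr; linarith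
        _ = 48 * (1 + |v|) ^ (1/2 : ℝ) := by
            rw [Real.mul_rpow (by norm_num) (by positivity)]
            have : (9:ℝ) ^ (1/2 : ℝ) = 3 := by
              rw [show (9:ℝ) = 3 ^ (2:ℝ) by norm_num, ← Real.rpow_mul (by norm_num)]; norm_num
            rw [this]; ring
    rw [div_le_iff₀ (by positivity)]
    refine h2.trans (le_of_eq ?_)
    rw [mul_assoc]
    congr 1
    rw [← Real.rpow_natCast, ← Real.rpow_add (by positivity)]
    norm_num

noncomputable def J0 : ℝ := ∫ v : ℝ, ell v ^ 2 / (1 + |v|) ^ 2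

lemma J0_nonneg : 0 ≤ J0 := integral_nonneg fun v => by positivity

lemma kap_le_J (u : ℝ) : kap u * ell u ≤ 2 * (ell u ^ 2 / (1 + |u|) ^ 2) := by
  have h := ell_one u
  unfold kap
  rw [one_div_mul_eq_div, mul_div_assoc', div_le_div_iff₀ (by positivity) (by positivity)]
  have h1 : (1 + |u|) ^ 2 ≤ 2 * (1 + u ^ 2) := by
    nlinarith [sq_nonneg (1 - |u|), sq_abs u]
  calc ell u * (1 + |u|) ^ 2 ≤ ell u * (2 * (1 + u^2)) := by gcongr
    _ ≤ (ell u ^ 2) * (2 * (1 + u^2)) := by gcongr; nlinarith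
    _ = _ := by ring

lemma kap_ell_int0 : Integrable (fun u => kap u * ell u) := by
  refine (J0_int.const_mul 2).mono' (kap_cont.mul ell_cont).aestronglyMeasurable (Eventually.of_forall fun u => ?_)
  rw [Real.norm_of_nonneg (mul_nonneg (kap_pos u).le (ell_pos u).le)]
  exact kap_le_J u

lemma kap_ell_int (a : ℝ) : Integrable (fun t => kap (t - a) * ell t) := by
  have h := ((kap_ell_int0.comp_sub_right a).const_mul (2 * ell a))
  refine h.mono' ((kap_cont.comp (by fun_prop)).mul ell_cont).aestronglyMeasurable (Eventually.of_forall fun t => ?_)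
  rw [Real.norm_of_nonneg (mul_nonneg (kap_pos _).le (ell_pos t).le)]
  have h1 := ell_add (t - a) a
  rw [sub_add_cancel] at h1
  calc kap (t - a) * ell t ≤ kap (t - a) * (2 * ell (t - a) * ell a) := by
        gcongr; exact (kap_pos _).le
    _ = _ := by ring

lemma kap_ell_bound (a : ℝ) : ∫ t, kap (t - a) * ell t ≤ 4 * J0 * ell a := by
  have h := ((kap_ell_int0.comp_sub_right a).const_mul (2 * ell a))
  calc ∫ t, kap (t - a) * ell t ≤ ∫ t, (2 * ell a) * (kap (t - a) * ell (t - a)) := by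
        refine integral_mono (kap_ell_int a) h fun t => ?_
        have h1 := ell_add (t - a) a
        rw [sub_add_cancel] at h1
        calc kap (t - a) * ell t ≤ kap (t - a) * (2 * ell (t - a) * ell a) := by
              gcongr; exact (kap_pos _).le
          _ = _ := by ring
    _ = 2 * ell a * ∫ u, kap u * ell u := by
        rw [integral_const_mul, integral_sub_right_eq_self (fun u => kap u * ell u)]
    _ ≤ 2 * ell a * (2 * J0) := by
        have := ell_pos a
        gcongr
        unfold J0
        rw [← integral_const_mul]
        exact integral_mono kap_ell_int0 (J0_int.const_mul 2) kap_le_J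
    _ = _ := by ring

lemma sum_kap (S : Finset ℂ) (hS : ∀ ρ ∈ S, zf ρ = 0 ∧ ρ.re = 1/2) (t : ℝ) :
    ∑ ρ ∈ S, (mz ρ : ℝ) * kap (t - ρ.im) ≤ 972 * J0 * ell t := by
  have h := transfer S hS (fun τ => 3 * kap (τ - t)) (fun τ => by have := kap_pos (τ - t); positivity)
    (by have := kap_cont; fun_prop) (by simpa [mul_assoc] using (kap_ell_int t).const_mul 3) (fun ρ => kap (t - ρ.im))
    (fun ρ _ τ hτ => by
      have : kap (τ - t) = kap (t - τ) := by unfold kap; congr 2; ring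
      rw [this]
      refine kap_near _ _ ?_
      have : t - ρ.im - (t - τ) = τ - ρ.im := by ring
      rw [this]; linarith)
  refine h.trans ?_
  have h2 := kap_ell_bound t
  simp only [mul_assoc]
  rw [integral_const_mul]
  nlinarith

lemma w2_int {δ : ℝ} (hδ : 0 < δ) (h1 : δ ≤ 1) : Integrable (fun t => ww δ t ^ 2 * ell t ^ 2) := by
  refine J0_int.mono' ((ww_cont hδ).pow 2 |>.mul (ell_cont.pow 2)).aestronglyMeasurable (Eventually.of_forall fun t => ?_)
  rw [Real.norm_of_nonneg (by positivity)]
  have := ww_le hδ h1 t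
  have h0 := (ww_pos hδ t).le
  calc ww δ t ^ 2 * ell t ^ 2 ≤ (1 / (1 + |t|)) ^ 2 * ell t ^ 2 := by gcongr
    _ = _ := by rw [div_pow]; ring

lemma w2_bound {δ : ℝ} (hδ : 0 < δ) (h1 : δ ≤ 1) :
    ∫ t, ww δ t ^ 2 * ell t ^ 2 ≤ 4 * J0 * (δ * Real.log (2/δ) ^ 2) := by
  have hs := Measure.integral_comp_mul_left (fun t => ww δ t ^ 2 * ell t ^ 2) δ⁻¹
  rw [inv_inv, abs_of_pos hδ, smul_eq_mul] at hs
  have hs' : ∫ t, ww δ t ^ 2 * ell t ^ 2 = δ⁻¹ * ∫ v, ww δ (δ⁻¹ * v) ^ 2 * ell (δ⁻¹ * v) ^ 2 := by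
    rw [hs]; field_simp
  rw [hs']
  have hlog : 0 ≤ Real.log (1/δ) := Real.log_nonneg (by rw [le_div_iff₀ hδ]; linarith)
  have hl2 : 1 + Real.log (1/δ) ≤ 2 * Real.log (2/δ) := by
    have : Real.log (2/δ) = Real.log 2 + Real.log (1/δ) := by
      rw [← Real.log_mul (by norm_num) (by positivity)]; congr 1; ring
    have := Real.log_two_gt_d9
    linarith
  have hpt : ∀ v, ww δ (δ⁻¹ * v) ^ 2 * ell (δ⁻¹ * v) ^ 2 ≤ (4 * δ^2 * Real.log (2/δ) ^ 2) * (ell v ^ 2 / (1 + |v|) ^ 2) := by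
    intro v
    have e1 : ww δ (δ⁻¹ * v) = δ / (1 + |v|) := by
      unfold ww
      rw [abs_mul, abs_of_pos (inv_pos.2 hδ), ← mul_assoc, mul_inv_cancel₀ hδ.ne', one_mul]
    have e2 : ell (δ⁻¹ * v) ≤ 2 * Real.log (2/δ) * ell v := by
      have h3 : ell (δ⁻¹ * v) ≤ Real.log (1/δ) + ell v := by
        unfold ell
        rw [← Real.log_mul (by positivity) (by positivity), abs_mul, abs_of_pos (inv_pos.2 hδ)]
        refine Real.log_le_log (by positivity) ?_
        have : 1 ≤ 1/δ := by rw [le_div_iff₀ hδ]; linarith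
        rw [← one_div]; nlinarith [abs_nonneg v]
      have := ell_one v
      nlinarith
    rw [e1]
    have := (ell_pos (δ⁻¹ * v)).le
    calc (δ / (1 + |v|)) ^ 2 * ell (δ⁻¹ * v) ^ 2 ≤ (δ / (1 + |v|)) ^ 2 * (2 * Real.log (2/δ) * ell v) ^ 2 := by gcongr
      _ = _ := by rw [div_pow]; ring
  have hint : Integrable (fun v => ww δ (δ⁻¹ * v) ^ 2 * ell (δ⁻¹ * v) ^ 2) :=
    (w2_int hδ h1).comp_mul_left' (inv_ne_zero hδ.ne')
  have := integral_mono hint (J0_int.const_mul (4 * δ^2 * Real.log (2/δ) ^ 2)) hpt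
  rw [integral_const_mul] at this
  calc _ ≤ δ⁻¹ * ((4 * δ^2 * Real.log (2/δ) ^ 2) * J0) := by gcongr; exact this
    _ = _ := by field_simp

lemma sum_w2 (S : Finset ℂ) (hS : ∀ ρ ∈ S, zf ρ = 0 ∧ ρ.re = 1/2) {δ : ℝ} (hδ : 0 < δ) (h1 : δ ≤ 1) :
    ∑ ρ ∈ S, (mz ρ : ℝ) * (ww δ ρ.im ^ 2 * ell ρ.im) ≤ 2592 * J0 * (δ * Real.log (2/δ) ^ 2) := by
  have e : ∀ t, (8 * (ww δ t ^ 2 * ell t)) * ell t = 8 * (ww δ t ^ 2 * ell t ^ 2) := fun t => by ring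
  have h := transfer S hS (fun t => 8 * (ww δ t ^ 2 * ell t)) (fun t => by have := ell_pos t; positivity)
    (by have := ww_cont hδ; have := ell_cont; fun_prop) (by simp only [e]; exact (w2_int hδ h1).const_mul 8)
    (fun ρ => ww δ ρ.im ^ 2 * ell ρ.im)
    (fun ρ _ t ht => by
      have ha := ww_near hδ h1 ρ.im t (by rw [abs_sub_comm]; linarith)
      have hb := ell_near ρ.im t (by rw [abs_sub_comm]; linarith)
      have := (ww_pos hδ ρ.im).le
      have := (ell_pos ρ.im).le
      calc ww δ ρ.im ^ 2 * ell ρ.im ≤ (2 * ww δ t) ^ 2 * (2 * ell t) := by gcongr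
        _ = _ := by ring)
  refine h.trans ?_
  simp only [e]
  rw [integral_const_mul]
  have := w2_bound hδ h1
  linarith

end SV


namespace SV
open scoped Topology
open Filter Metric

noncomputable def lam (δ : ℝ) : ℝ := Real.log (1 + δ)
noncomputable def kk (δ : ℝ) (s : ℂ) : ℂ := (Complex.exp (lam δ * s) - 1) / s

lemma lam_nonneg {δ : ℝ} (hδ : 0 < δ) : 0 ≤ lam δ := Real.log_nonneg (by linarith)
lemma lam_le {δ : ℝ} (hδ : 0 < δ) : lam δ ≤ δ := by
  have := Real.log_le_sub_one_of_pos (x := 1 + δ) (by linarith)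
  unfold lam; linarith
lemma exp_lam {δ : ℝ} (hδ : 0 < δ) : Real.exp (lam δ) = 1 + δ := Real.exp_log (by linarith)

lemma exp_lam_norm {δ : ℝ} (hδ : 0 < δ) (h1 : δ ≤ 1) (s : ℂ) (hs : s.re ≤ 2) :
    ‖Complex.exp (lam δ * s)‖ ≤ 4 := by
  rw [Complex.norm_exp]
  have : ((lam δ : ℂ) * s).re = lam δ * s.re := by simp
  rw [this]
  calc Real.exp (lam δ * s.re) ≤ Real.exp (lam δ * 2) := by
        have := lam_nonneg hδ
        gcongr
    _ = (1 + δ) ^ 2 := by rw [mul_comm, ← exp_lam hδ, ← Real.exp_nat_mul]; norm_num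
    _ ≤ 4 := by nlinarith

lemma exp_lam_lip {δ : ℝ} (hδ : 0 < δ) (h1 : δ ≤ 1) (s w : ℂ) (hs : s.re ≤ 2) (hw : w.re ≤ 2) :
    ‖Complex.exp (lam δ * s) - Complex.exp (lam δ * w)‖ ≤ 4 * δ * ‖s - w‖ := by
  refine (convex_halfSpace_re_le 2).norm_image_sub_le_of_norm_hasDerivWithin_le (𝕜 := ℂ)
    (f := fun z => Complex.exp (lam δ * z)) (f' := fun z => Complex.exp (lam δ * z) * (lam δ * 1)) ?_ ?_ hw hs
  · intro z _
    exact (((hasDerivAt_id z).const_mul (lam δ : ℂ)).cexp).hasDerivWithinAt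
  · intro z hz
    rw [norm_mul, mul_one, Complex.norm_real, Real.norm_of_nonneg (lam_nonneg hδ)]
    exact mul_le_mul (exp_lam_norm hδ h1 z hz) (lam_le hδ) (lam_nonneg hδ) (by norm_num)

lemma kk_mul (δ : ℝ) (s : ℂ) (hs : s ≠ 0) : s * kk δ s = Complex.exp (lam δ * s) - 1 := by
  unfold kk; field_simp

lemma ne_zero_of_re {s : ℂ} (hs : 1/2 ≤ s.re) : s ≠ 0 := by
  rintro rfl; simp at hs; linarith

lemma kk_le {δ : ℝ} (hδ : 0 < δ) (h1 : δ ≤ 1) (s : ℂ) (hs1 : 1/2 ≤ s.re) (hs : s.re ≤ 2) :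
    ‖kk δ s‖ ≤ 4 * δ := by
  have h := exp_lam_lip hδ h1 s 0 hs (by simp)
  simp only [mul_zero, Complex.exp_zero, sub_zero] at h
  have h0 := ne_zero_of_re hs1
  unfold kk
  rw [norm_div, div_le_iff₀ (norm_pos_iff.2 h0)]
  exact h

lemma kk_ww {δ : ℝ} (hδ : 0 < δ) (h1 : δ ≤ 1) (s : ℂ) (hs1 : 1/2 ≤ s.re) (hs : s.re ≤ 2) :
    ‖kk δ s‖ ≤ 9 * ww δ s.im := by
  have ha := kk_le hδ h1 s hs1 hs
  have h0 := ne_zero_of_re hs1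
  have hb : |s.im| * ‖kk δ s‖ ≤ 5 := by
    calc |s.im| * ‖kk δ s‖ ≤ ‖s‖ * ‖kk δ s‖ := by gcongr; exact Complex.abs_im_le_norm s
      _ = ‖Complex.exp (lam δ * s) - 1‖ := by rw [← norm_mul, kk_mul δ s h0]
      _ ≤ 4 + 1 := (norm_sub_le _ _).trans (by rw [norm_one]; gcongr; exact exp_lam_norm hδ h1 s hs)
      _ = 5 := by norm_num
  unfold ww
  rw [mul_div_assoc', le_div_iff₀ (by positivity)]
  nlinarith

lemma kk_diff_aux {δ : ℝ} (hδ : 0 < δ) (h1 : δ ≤ 1) (s w : ℂ) (hs1 : 1/2 ≤ s.re) (hs : s.re ≤ 2)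
    (hw1 : 1/2 ≤ w.re) (hw : w.re ≤ 2) : ‖s‖ * ‖kk δ s - kk δ w‖ ≤ 8 * δ * ‖s - w‖ := by
  have e : s * (kk δ s - kk δ w) = (Complex.exp (lam δ * s) - Complex.exp (lam δ * w)) - (s - w) * kk δ w := by
    have a := kk_mul δ s (ne_zero_of_re hs1)
    have b := kk_mul δ w (ne_zero_of_re hw1)
    linear_combination a - b
  rw [← norm_mul, e]
  refine (norm_sub_le _ _).trans ?_
  rw [norm_mul]
  have a := exp_lam_lip hδ h1 s w hs hw
  have b := kk_le hδ h1 w hw1 hw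
  nlinarith [norm_nonneg (s - w)]

lemma kk_diff {δ : ℝ} (hδ : 0 < δ) (h1 : δ ≤ 1) (s w : ℂ) (hs1 : 1/2 ≤ s.re) (hs : s.re ≤ 2)
    (hw1 : 1/2 ≤ w.re) (hw : w.re ≤ 2) : ‖kk δ s - kk δ w‖ ≤ 24 * ww δ s.im * ‖s - w‖ := by
  have h := kk_diff_aux hδ h1 s w hs1 hs hw1 hw
  have a := Complex.abs_im_le_norm s
  have b := (le_abs_self _).trans (Complex.abs_re_le_norm s)
  have hi := abs_nonneg s.im
  unfold ww
  rw [mul_div_assoc', div_mul_eq_mul_div, le_div_iff₀ (by positivity)]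
  have hn := norm_nonneg (kk δ s - kk δ w)
  have c : 1 + δ * |s.im| ≤ 3 * ‖s‖ := by nlinarith
  calc ‖kk δ s - kk δ w‖ * (1 + δ * |s.im|) ≤ ‖kk δ s - kk δ w‖ * (3 * ‖s‖) := by gcongr
    _ = 3 * (‖s‖ * ‖kk δ s - kk δ w‖) := by ring
    _ ≤ 3 * (8 * δ * ‖s - w‖) := by gcongr
    _ = _ := by ring

lemma kk_one {δ : ℝ} (hδ : 0 < δ) : kk δ 1 = δ := by
  unfold kk
  rw [mul_one, div_one, ← Complex.ofReal_exp, exp_lam hδ]; push_cast; ring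

lemma kk_da (δ : ℝ) (s : ℂ) (hs : s ≠ 0) : DifferentiableAt ℂ (kk δ) s := by
  unfold kk
  exact DifferentiableAt.div (by fun_prop) (by fun_prop) hs

lemma ds_le {δ : ℝ} (hδ : 0 < δ) (h1 : δ ≤ 1) (s : ℂ) (hs1 : 1/2 ≤ s.re) (hs : s.re ≤ 2) :
    ‖dslope (kk δ) 1 s‖ ≤ 24 * ww δ s.im := by
  by_cases h : s = 1
  · subst h
    rw [dslope_same]
    have : ww δ (1:ℂ).im = δ := by simp [ww]
    rw [this]
    refine norm_deriv_le_of_lip' (by positivity) ?_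
    have hU : {z : ℂ | 1/2 < z.re ∧ z.re < 2} ∈ 𝓝 (1:ℂ) := by
      refine IsOpen.mem_nhds ((isOpen_lt continuous_const Complex.continuous_re).inter (isOpen_lt Complex.continuous_re continuous_const)) ?_
      constructor <;> simp <;> norm_num
    filter_upwards [hU] with z hz
    have h2 := kk_diff hδ h1 z 1 hz.1.le hz.2.le (by simp; norm_num) (by simp)
    refine h2.trans ?_
    gcongr
    unfold ww
    rw [div_le_iff₀ (by positivity)]
    nlinarith [mul_nonneg (mul_nonneg hδ.le hδ.le) (abs_nonneg z.im)]
  · rw [dslope_of_ne _ h, slope_def_module, norm_smul, norm_inv]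
    have h2 := kk_diff hδ h1 s 1 hs1 hs (by simp; norm_num) (by simp)
    have h3 : 0 < ‖s - 1‖ := norm_pos_iff.2 (sub_ne_zero.2 h)
    rw [inv_mul_le_iff₀ h3]
    linarith

lemma ds_da (δ : ℝ) (s : ℂ) (hs : 1/2 < s.re) : DifferentiableAt ℂ (dslope (kk δ) 1) s := by
  have ho : IsOpen {z : ℂ | 1/2 < z.re} := isOpen_lt continuous_const Complex.continuous_re
  have h1 : {z : ℂ | 1/2 < z.re} ∈ 𝓝 (1:ℂ) := ho.mem_nhds (by simp; norm_num)
  have := (Complex.differentiableOn_dslope (f := kk δ) h1).2 (fun z hz => (kk_da δ z (ne_zero_of_re hz.le)).differentiableWithinAt)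
  exact this.differentiableAt (ho.mem_nhds hs)

lemma ds_eq {δ : ℝ} (hδ : 0 < δ) (s : ℂ) (hs : s ≠ 1) : dslope (kk δ) 1 s = (kk δ s - δ) / (s - 1) := by
  rw [dslope_of_ne _ hs, slope_def_field, kk_one hδ]

end SV


namespace SV
open scoped Topology
open Filter Metric

lemma cpsi_eq (x : ℝ) : chebyshevPsi x = Chebyshev.psi x := by
  rw [Chebyshev.psi_eq_sum_Icc, chebyshevPsi]
  congr 1
  ext n; simp [Nat.lt_succ_iff]

noncomputable def ea (a : ℂ) : ℝ → ℂ := (Set.Ici (0:ℝ)).indicator (fun u => Complex.exp (a * u))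

lemma ea_neg (a : ℂ) (u : ℝ) (hu : u < 0) : ea a u = 0 := by
  rw [ea, Set.indicator_of_notMem (by simpa using hu)]

lemma ea_pos (a : ℂ) (u : ℝ) (hu : 0 ≤ u) : ea a u = Complex.exp (a * u) := by
  rw [ea, Set.indicator_of_mem (by simpa using hu)]

lemma ea_meas (a : ℂ) : Measurable (ea a) :=
  (by fun_prop : Continuous (fun u : ℝ => Complex.exp (a * u))).measurable.indicator measurableSet_Ici

lemma ea_bd (a : ℂ) (ha : a.re ≤ 1) (u : ℝ) (hu : 0 ≤ u) : ‖ea a u‖ ≤ Real.exp u := by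
  rw [ea_pos a u hu, Complex.norm_exp]
  apply Real.exp_le_exp.2
  simp
  nlinarith

lemma ea_lap (a s : ℂ) (h : a.re < s.re) :
    Integrable (fun u : ℝ => ea a u * Complex.exp (-(s * u))) ∧
    ∫ u : ℝ, ea a u * Complex.exp (-(s * u)) = 1 / (s - a) := by
  have h1 : (fun u : ℝ => ea a u * Complex.exp (-(s * u))) =
      (Set.Ici (0:ℝ)).indicator (fun u : ℝ => Complex.exp ((a - s) * u)) := by
    ext u
    by_cases hu : 0 ≤ u
    · rw [ea_pos a u hu, Set.indicator_of_mem (by simpa using hu), ← Complex.exp_add]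
      congr 1; ring
    · rw [ea_neg a u (not_le.1 hu), Set.indicator_of_notMem (by simpa using hu), zero_mul]
  have h2 : (a - s).re < 0 := by simp; linarith
  rw [h1]
  constructor
  · rw [integrable_indicator_iff measurableSet_Ici, integrableOn_Ici_iff_integrableOn_Ioi]
    exact integrableOn_exp_mul_complex_Ioi h2 0
  · rw [integral_indicator measurableSet_Ici, integral_Ici_eq_integral_Ioi, integral_exp_mul_complex_Ioi h2]
    simp only [Complex.ofReal_zero, mul_zero, Complex.exp_zero]
    rw [← neg_sub s a, neg_div_neg_eq]

lemma psi_exp_neg (u : ℝ) (hu : u < 0) : Chebyshev.psi (Real.exp u) = 0 :=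
  Chebyshev.psi_eq_zero_of_lt_two (by linarith [Real.exp_lt_one_iff.2 hu])

lemma psi_exp_meas (c : ℝ) : Measurable (fun u : ℝ => ((Chebyshev.psi (Real.exp (u + c)) : ℝ) : ℂ)) := by
  apply Complex.measurable_ofReal.comp
  exact Chebyshev.psi_mono.measurable.comp (by fun_prop)

lemma psi_int (s : ℂ) (hs : s.re = 2) :
    Integrable (fun u : ℝ => ((Chebyshev.psi (Real.exp u) : ℝ) : ℂ) * Complex.exp (-(s * u))) := by
  have h0 : Integrable ((Set.Ici (0:ℝ)).indicator (fun u : ℝ => (Real.log 4 + 4) * Real.exp (-1 * u))) := by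
    rw [integrable_indicator_iff measurableSet_Ici, integrableOn_Ici_iff_integrableOn_Ioi]
    exact (integrableOn_exp_mul_Ioi (by norm_num) 0).const_mul _
  refine h0.mono' ?_ (Eventually.of_forall fun u => ?_)
  · have := psi_exp_meas 0
    simp only [add_zero] at this
    exact (this.mul (by fun_prop)).aestronglyMeasurable
  · by_cases hu : 0 ≤ u
    · rw [Set.indicator_of_mem (by simpa using hu), norm_mul, Complex.norm_exp, Complex.norm_real,
        Real.norm_eq_abs, abs_of_nonneg (Chebyshev.psi_nonneg _)]
      have h1 := Chebyshev.psi_le_const_mul_self (Real.exp_pos u).le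
      have h2 : (-(s * (u:ℂ))).re = -2 * u := by simp [hs]
      rw [h2]
      calc _ ≤ (Real.log 4 + 4) * Real.exp u * Real.exp (-2*u) := by gcongr
        _ = _ := by rw [mul_assoc, ← Real.exp_add]; congr 2; ring
    · rw [psi_exp_neg u (not_le.1 hu), Set.indicator_of_notMem (by simpa using hu)]; simp

lemma psi_lap (s : ℂ) (hs : s.re = 2) :
    s * ∫ u : ℝ, ((Chebyshev.psi (Real.exp u) : ℝ) : ℂ) * Complex.exp (-(s * u)) =
      - (deriv riemannZeta s / riemannZeta s) := by
  have h1 := ArithmeticFunction.LSeries_vonMangoldt_eq_deriv_riemannZeta_div (s := s) (by rw [hs]; norm_num)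
  have hps : ∀ t : ℝ, ∑ k ∈ Finset.Icc 1 ⌊t⌋₊, ArithmeticFunction.vonMangoldt k = Chebyshev.psi t := by
    intro t; rfl
  have hO : (fun n : ℕ ↦ ∑ k ∈ Finset.Icc 1 n, ArithmeticFunction.vonMangoldt k) =O[atTop] fun n ↦ (n : ℝ) ^ (1:ℝ) := by
    apply Asymptotics.IsBigO.of_bound (Real.log 4 + 4)
    refine Eventually.of_forall fun n => ?_
    have := hps n
    rw [Nat.floor_natCast] at this
    rw [this, Real.rpow_one, Real.norm_eq_abs, abs_of_nonneg (Chebyshev.psi_nonneg _), Real.norm_eq_abs, abs_of_nonneg (by positivity)]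
    exact Chebyshev.psi_le_const_mul_self (by positivity)
  have h2 := LSeries_eq_mul_integral_of_nonneg (fun n => ArithmeticFunction.vonMangoldt n) zero_le_one (s := s) (by rw [hs]; norm_num) hO (fun n => ArithmeticFunction.vonMangoldt_nonneg)
  rw [h1, neg_div] at h2
  rw [h2]
  congr 1
  have h3 : (fun t : ℝ => (∑ k ∈ Finset.Icc 1 ⌊t⌋₊, ((ArithmeticFunction.vonMangoldt k : ℝ) : ℂ)) * (t:ℂ) ^ (-(s + 1))) = fun t : ℝ => ((Chebyshev.psi t : ℝ) : ℂ) * (t:ℂ) ^ (-(s + 1)) := by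
    ext t; rw [← hps t]; push_cast; rfl
  rw [h3]
  have h4 : Set.Ioi (1:ℝ) = Real.exp '' Set.Ioi 0 := by
    ext x; constructor
    · intro hx
      exact ⟨Real.log x, Real.log_pos hx, Real.exp_log (lt_trans one_pos hx)⟩
    · rintro ⟨y, hy, rfl⟩
      exact Real.one_lt_exp_iff.2 hy
  rw [h4, integral_image_eq_integral_abs_deriv_smul (f' := Real.exp) measurableSet_Ioi (fun x _ => (Real.hasDerivAt_exp x).hasDerivWithinAt) Real.exp_injective.injOn]
  rw [← setIntegral_eq_integral_of_forall_compl_eq_zero (s := Set.Ici (0:ℝ)) (fun x hx => by rw [psi_exp_neg x (by simpa using hx)]; simp), integral_Ici_eq_integral_Ioi]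
  congr 1; ext u
  rw [abs_of_pos (Real.exp_pos u), Complex.real_smul, Complex.ofReal_exp, ← Complex.ofReal_exp u, Complex.cpow_def_of_ne_zero (by exact_mod_cast (Real.exp_pos u).ne'),
    ← Complex.ofReal_log (Real.exp_pos u).le, Real.log_exp, Complex.ofReal_exp]
  rw [mul_left_comm, ← Complex.exp_add]
  congr 2; ring

noncomputable def EE (δ : ℝ) (S : Finset ℂ) (s : ℂ) : ℂ :=
  -(kk δ s * (deriv zf s / zf s)) + dslope (kk δ) 1 s +
    ∑ ρ ∈ S, (mz ρ : ℂ) * kk δ ρ * (1 / (s - ρ) - 1 / (s - ρ + 1))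

noncomputable def qq (δ : ℝ) (S : Finset ℂ) (u : ℝ) : ℂ :=
  ((Chebyshev.psi (Real.exp (u + lam δ)) : ℝ) : ℂ) - ((Chebyshev.psi (Real.exp u) : ℝ) : ℂ) - δ * ea 1 u +
    ∑ ρ ∈ S, (mz ρ : ℂ) * kk δ ρ * (ea ρ u - ea (ρ - 1) u)

lemma qq_meas (δ : ℝ) (S : Finset ℂ) : Measurable (qq δ S) := by
  unfold qq
  have h0 := psi_exp_meas 0
  simp only [add_zero] at h0
  have h1 := psi_exp_meas (lam δ)
  have h2 : Measurable (fun u => ∑ ρ ∈ S, (mz ρ : ℂ) * kk δ ρ * (ea ρ u - ea (ρ - 1) u)) :=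
    Finset.measurable_sum S (fun ρ _ => ((ea_meas ρ).sub (ea_meas (ρ-1))).const_mul _)
  exact ((h1.sub h0).sub ((ea_meas 1).const_mul _)).add h2

lemma qq_neg {δ : ℝ} (hδ : 0 < δ) (h1 : δ ≤ 1) (S : Finset ℂ) (u : ℝ) (hu : u < 0) : qq δ S u = 0 := by
  unfold qq
  have h2 : Chebyshev.psi (Real.exp (u + lam δ)) = 0 := by
    apply Chebyshev.psi_eq_zero_of_lt_two
    rw [Real.exp_add, lam, Real.exp_log (by linarith)]
    have := Real.exp_lt_one_iff.2 hu
    have := Real.exp_pos u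
    nlinarith
  rw [h2, psi_exp_neg u hu, ea_neg 1 u hu, Finset.sum_eq_zero]
  · simp
  · intro ρ _
    rw [ea_neg _ u hu, ea_neg _ u hu]; simp

lemma qq_bd {δ : ℝ} (hδ : 0 < δ) (h1 : δ ≤ 1) (S : Finset ℂ) (hS : ∀ ρ ∈ S, zf ρ = 0 ∧ ρ.re = 1/2) :
    ∃ C, ∀ u, 0 ≤ u → ‖qq δ S u‖ ≤ C * Real.exp u := by
  refine ⟨(Real.log 4 + 4) * 2 + (Real.log 4 + 4) + 1 + ∑ ρ ∈ S, ‖(mz ρ : ℂ) * kk δ ρ‖ * 2, fun u hu => ?_⟩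
  unfold qq
  have e0 := Real.exp_pos u
  have hl : 0 ≤ Real.log 4 := Real.log_nonneg (by norm_num)
  refine (norm_add_le _ _).trans ?_
  have n1 : ‖((Chebyshev.psi (Real.exp (u + lam δ)) : ℝ) : ℂ)‖ ≤ (Real.log 4 + 4) * 2 * Real.exp u := by
    rw [Complex.norm_real, Real.norm_eq_abs, abs_of_nonneg (Chebyshev.psi_nonneg _)]
    refine (Chebyshev.psi_le_const_mul_self (Real.exp_pos _).le).trans ?_
    rw [Real.exp_add, lam, Real.exp_log (by linarith), mul_assoc]
    refine mul_le_mul_of_nonneg_left ?_ (by linarith)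
    nlinarith
  have n2 : ‖((Chebyshev.psi (Real.exp u) : ℝ) : ℂ)‖ ≤ (Real.log 4 + 4) * Real.exp u := by
    rw [Complex.norm_real, Real.norm_eq_abs, abs_of_nonneg (Chebyshev.psi_nonneg _)]
    exact (Chebyshev.psi_le_const_mul_self (Real.exp_pos _).le)
  have n3 : ‖(δ:ℂ) * ea 1 u‖ ≤ 1 * Real.exp u := by
    rw [norm_mul, Complex.norm_real, Real.norm_eq_abs, abs_of_pos hδ]
    gcongr
    exact ea_bd 1 (by simp) u hu
  have n4 : ‖∑ ρ ∈ S, (mz ρ : ℂ) * kk δ ρ * (ea ρ u - ea (ρ - 1) u)‖ ≤ (∑ ρ ∈ S, ‖(mz ρ : ℂ) * kk δ ρ‖ * 2) * Real.exp u := by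
    rw [Finset.sum_mul]
    refine norm_sum_le_of_le S fun ρ hρ => ?_
    rw [norm_mul, mul_assoc]
    gcongr
    refine (norm_sub_le _ _).trans ?_
    have := ea_bd ρ (by rw [(hS ρ hρ).2]; norm_num) u hu
    have := ea_bd (ρ-1) (by simp [(hS ρ hρ).2]; norm_num) u hu
    linarith
  have n5 := (norm_sub_le (((Chebyshev.psi (Real.exp (u + lam δ)) : ℝ) : ℂ) - ((Chebyshev.psi (Real.exp u) : ℝ) : ℂ)) (δ * ea 1 u))
  have n6 := (norm_sub_le ((Chebyshev.psi (Real.exp (u + lam δ)) : ℝ) : ℂ) ((Chebyshev.psi (Real.exp u) : ℝ) : ℂ))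
  linarith

lemma zf_logderiv (s : ℂ) (hs : 1 < s.re) : deriv zf s / zf s = 1 / (s - 1) + deriv riemannZeta s / riemannZeta s := by
  have hs1 : s ≠ 1 := by rintro rfl; simp at hs
  have h0 := riemannZeta_ne_zero_of_one_lt_re hs
  have h2 : s - 1 ≠ 0 := sub_ne_zero.2 hs1
  have h1 : deriv zf s = riemannZeta s + (s - 1) * deriv riemannZeta s := by
    have he : zf =ᶠ[𝓝 s] fun z => (z - 1) * riemannZeta z := by
      filter_upwards [isOpen_ne.mem_nhds hs1] with z hz using zf_ne hz
    rw [he.deriv_eq]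
    have := ((hasDerivAt_id s).sub_const 1).mul (differentiableAt_riemannZeta hs1).hasDerivAt
    have := this.deriv
    simp only [id, one_mul] at this
    exact this
  rw [h1, zf_ne hs1]
  field_simp
  try ring

lemma qq_lap {δ : ℝ} (hδ : 0 < δ) (h1 : δ ≤ 1) (S : Finset ℂ) (hS : ∀ ρ ∈ S, zf ρ = 0 ∧ ρ.re = 1/2) (t : ℝ) :
    EE δ S (2 + t * Complex.I) = ∫ u : ℝ, qq δ S u * Complex.exp (-((2 + t * Complex.I) * u)) := by
  set s : ℂ := 2 + t * Complex.I with hs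
  have hre : s.re = 2 := by simp [hs]
  set P := ∫ u : ℝ, ((Chebyshev.psi (Real.exp u) : ℝ) : ℂ) * Complex.exp (-(s * u)) with hP
  have hPi := psi_int s hre
  have hPl := psi_lap s hre
  rw [← hP] at hPl
  set g : ℝ → ℂ := fun u : ℝ => ((Chebyshev.psi (Real.exp u) : ℝ) : ℂ) * Complex.exp (-(s * u)) with hg
  have e1 : ∀ u : ℝ, ((Chebyshev.psi (Real.exp (u + lam δ)) : ℝ) : ℂ) * Complex.exp (-(s * u)) = Complex.exp (lam δ * s) * g (u + lam δ) := by
    intro u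
    simp only [hg]
    rw [mul_left_comm, ← Complex.exp_add]
    congr 2; push_cast; ring
  have i1 : Integrable (fun u : ℝ => ((Chebyshev.psi (Real.exp (u + lam δ)) : ℝ) : ℂ) * Complex.exp (-(s * u))) := by
    simp_rw [e1]
    exact (hPi.comp_add_right (lam δ)).const_mul _
  have v1 : ∫ u : ℝ, ((Chebyshev.psi (Real.exp (u + lam δ)) : ℝ) : ℂ) * Complex.exp (-(s * u)) = Complex.exp (lam δ * s) * P := by
    simp_rw [e1]
    rw [integral_const_mul, integral_add_right_eq_self g]
  have l1 := ea_lap 1 s (by rw [hre]; simp)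
  have l2 : ∀ ρ ∈ S, Integrable (fun u : ℝ => (mz ρ : ℂ) * kk δ ρ * (ea ρ u - ea (ρ - 1) u) * Complex.exp (-(s * u))) ∧
      ∫ u : ℝ, (mz ρ : ℂ) * kk δ ρ * (ea ρ u - ea (ρ - 1) u) * Complex.exp (-(s * u)) = (mz ρ : ℂ) * kk δ ρ * (1 / (s - ρ) - 1 / (s - ρ + 1)) := by
    intro ρ hρ
    have a1 := ea_lap ρ s (by rw [hre, (hS ρ hρ).2]; norm_num)
    have a2 := ea_lap (ρ-1) s (by simp [hre, (hS ρ hρ).2]; norm_num)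
    have e : (fun u : ℝ => (mz ρ : ℂ) * kk δ ρ * (ea ρ u - ea (ρ - 1) u) * Complex.exp (-(s * u))) = fun u : ℝ => (mz ρ : ℂ) * kk δ ρ * (ea ρ u * Complex.exp (-(s * u)) - ea (ρ - 1) u * Complex.exp (-(s * u))) := by
      ext u; ring
    rw [e]
    refine ⟨(a1.1.sub a2.1).const_mul _, ?_⟩
    rw [integral_const_mul, integral_sub a1.1 a2.1, a1.2, a2.2, show s - (ρ - 1) = s - ρ + 1 by ring]
  have eq : (fun u : ℝ => qq δ S u * Complex.exp (-(s * u))) = fun u : ℝ =>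
      (((Chebyshev.psi (Real.exp (u + lam δ)) : ℝ) : ℂ) * Complex.exp (-(s * u)) - g u - δ * (ea 1 u * Complex.exp (-(s * u))))
      + ∑ ρ ∈ S, (mz ρ : ℂ) * kk δ ρ * (ea ρ u - ea (ρ - 1) u) * Complex.exp (-(s * u)) := by
    ext u; simp only [qq, hg, ← Finset.sum_mul]; ring
  have j1 : Integrable (fun u : ℝ => ((Chebyshev.psi (Real.exp (u + lam δ)) : ℝ) : ℂ) * Complex.exp (-(s * u)) - g u) := i1.sub hPi
  have j2 : Integrable (fun u : ℝ => (δ:ℂ) * (ea 1 u * Complex.exp (-(s * u)))) := l1.1.const_mul _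
  have j3 : Integrable (fun u : ℝ => ((Chebyshev.psi (Real.exp (u + lam δ)) : ℝ) : ℂ) * Complex.exp (-(s * u)) - g u - (δ:ℂ) * (ea 1 u * Complex.exp (-(s * u)))) := j1.sub j2
  have j4 : Integrable (fun u : ℝ => ∑ ρ ∈ S, (mz ρ : ℂ) * kk δ ρ * (ea ρ u - ea (ρ - 1) u) * Complex.exp (-(s * u))) := integrable_finsetSum S fun ρ hρ => (l2 ρ hρ).1
  rw [eq, integral_add j3 j4,
    integral_sub j1 j2, integral_sub i1 hPi, integral_const_mul, v1, l1.2, integral_finsetSum S (fun ρ hρ => (l2 ρ hρ).1),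
    Finset.sum_congr rfl (fun ρ hρ => (l2 ρ hρ).2)]
  rw [EE]
  congr 1
  have hs1 : s ≠ 1 := by intro h; rw [h] at hre; simp at hre
  have hs0 : s ≠ 0 := by intro h; rw [h] at hre; simp at hre
  have h2 : s - 1 ≠ 0 := sub_ne_zero.2 hs1
  rw [ds_eq hδ s hs1, zf_logderiv s (by rw [hre]; norm_num)]
  have hZ : deriv riemannZeta s / riemannZeta s = - (s * P) := by rw [hPl, neg_neg]
  rw [hZ]
  have hk : kk δ s * s = Complex.exp (lam δ * s) - 1 := by unfold kk; field_simp
  have : Complex.exp (lam δ * s) = kk δ s * s + 1 := by rw [hk]; ring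
  rw [this, ← hP]
  field_simp
  ring

end SV


namespace SV
open scoped Topology
open Filter Metric

noncomputable def FF (δ : ℝ) (S : Finset ℂ) (t : ℝ) : ℝ :=
  ∑ ρ ∈ S, (mz ρ : ℝ) * (ww δ ρ.im * kap (t - ρ.im))

noncomputable def RR (δ η T t : ℝ) : ℝ := if T - 1 < |t| then 729 / η * (ww δ t * ell t) else 0

lemma FF_nonneg {δ : ℝ} (hδ : 0 < δ) (S : Finset ℂ) (t : ℝ) : 0 ≤ FF δ S t :=
  Finset.sum_nonneg fun ρ _ => by
    have := ww_pos hδ ρ.im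
    have := kap_pos (t - ρ.im)
    positivity

lemma im_le_norm_sq (z : ℂ) : z.im ^ 2 + z.re ^ 2 = ‖z‖ ^ 2 := by
  rw [← Complex.normSq_eq_norm_sq, Complex.normSq_apply]; ring

lemma EE_bd (hRH : RiemannHypothesis) {δ : ℝ} (hδ : 0 < δ) (h1 : δ ≤ 1) {η : ℝ} (hη : 0 < η) (T : ℝ)
    (S : Finset ℂ) (hS : ∀ ρ ∈ S, zf ρ = 0 ∧ ρ.re = 1/2)
    (hST : ∀ ρ, zf ρ = 0 → ρ.re = 1/2 → |ρ.im| ≤ T → ρ ∈ S) (s : ℂ) (hs1 : 1/2 + η ≤ s.re) (hs2 : s.re ≤ 2) :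
    ‖EE δ S s‖ ≤ 4000000 * (ww δ s.im * ell s.im) + 27 * FF δ S s.im + RR δ η T s.im := by
  classical
  set t := s.im with ht
  have hw := ww_pos hδ t
  have hl := ell_one t
  obtain ⟨hc, hd⟩ := St_bounds t
  have hzs : zf s ≠ 0 := fun h => by
    have := zf_RH hRH h (by linarith)
    linarith
  have hds : dist s (2 + t * Complex.I) ≤ 3/2 := by
    rw [dist_eq_norm]
    have : s - (2 + t * Complex.I) = ((s.re - 2 : ℝ) : ℂ) := by
      apply Complex.ext <;> simp [ht]
    rw [this, Complex.norm_real, Real.norm_eq_abs, abs_le]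
    constructor <;> linarith
  have hD := hd s hds hzs
  have hks := kk_ww hδ h1 s (by linarith) hs2
  have hre : ∀ ρ : ℂ, (ρ - (2 + t * Complex.I)).re = ρ.re - 2 := fun ρ => by simp
  have him : ∀ ρ : ℂ, (ρ - (2 + t * Complex.I)).im = ρ.im - t := fun ρ => by simp
  have hSt : ∀ ρ ∈ St t, ρ.re = 1/2 ∧ |ρ.im - t| ≤ 1 := by
    intro ρ hρ
    obtain ⟨a1, a2⟩ := (mem_St t ρ).1 hρ
    rw [dist_eq_norm] at a1
    have a3 := Complex.abs_re_le_norm (ρ - (2 + t * Complex.I))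
    rw [hre] at a3
    have a4 := abs_le.1 (a3.trans a1)
    have a5 := zf_RH hRH a2 (by linarith)
    refine ⟨a5, ?_⟩
    have a6 := im_le_norm_sq (ρ - (2 + t * Complex.I))
    rw [hre, him, a5] at a6
    have := norm_nonneg (ρ - (2 + t * Complex.I))
    rw [abs_le]; constructor <;> nlinarith
  have hSt2 : ∀ ρ ∈ S, ρ ∉ St t → 1/4 ≤ (t - ρ.im) ^ 2 := by
    intro ρ hρ hn
    have a1 : 8/5 < dist ρ (2 + t * Complex.I) := by
      by_contra h
      exact hn ((mem_St t ρ).2 ⟨not_lt.1 h, (hS ρ hρ).1⟩)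
    rw [dist_eq_norm] at a1
    have a6 := im_le_norm_sq (ρ - (2 + t * Complex.I))
    rw [hre, him, (hS ρ hρ).2] at a6
    nlinarith
  -- individual terms
  have tA : ∀ ρ ∈ S ∩ St t, ‖(mz ρ : ℂ) * kk δ ρ * (1 / (s - ρ) - 1 / (s - ρ + 1)) - kk δ s * ((mz ρ : ℂ) / (s - ρ))‖ ≤ (mz ρ : ℝ) * (42 * ww δ t) := by
    intro ρ hρ
    rw [Finset.mem_inter] at hρ
    obtain ⟨b1, b2⟩ := hSt ρ hρ.2
    have c1 : (s - ρ).re = s.re - 1/2 := by simp [b1]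
    have c2 : s - ρ ≠ 0 := fun h => by rw [h] at c1; simp at c1; linarith
    have c3 : 1 ≤ ‖s - ρ + 1‖ := by
      refine le_trans ?_ (Complex.re_le_norm _)
      simp only [Complex.add_re, c1, Complex.one_re]; linarith
    have c4 : s - ρ + 1 ≠ 0 := fun h => by rw [h] at c3; simp at c3; linarith
    have e : (mz ρ : ℂ) * kk δ ρ * (1 / (s - ρ) - 1 / (s - ρ + 1)) - kk δ s * ((mz ρ : ℂ) / (s - ρ)) =
        (mz ρ : ℂ) * (-((kk δ s - kk δ ρ) / (s - ρ)) - kk δ ρ / (s - ρ + 1)) := by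
      field_simp; ring
    rw [e, norm_mul, Complex.norm_natCast]
    refine mul_le_mul_of_nonneg_left ?_ (by positivity)
    refine (norm_sub_le _ _).trans ?_
    rw [norm_neg, norm_div, norm_div]
    have d1 : ‖kk δ s - kk δ ρ‖ / ‖s - ρ‖ ≤ 24 * ww δ t := by
      rw [div_le_iff₀ (norm_pos_iff.2 c2)]
      exact kk_diff hδ h1 s ρ (by linarith) hs2 (by rw [b1]) (by rw [b1]; norm_num)
    have d2 : ‖kk δ ρ‖ / ‖s - ρ + 1‖ ≤ 18 * ww δ t := by
      refine (div_le_self (norm_nonneg _) c3).trans ?_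
      have := kk_ww hδ h1 ρ (by rw [b1]) (by rw [b1]; norm_num)
      have := ww_near hδ h1 ρ.im t b2
      linarith
    linarith
  have tB : ∀ ρ ∈ S \ St t, ‖(mz ρ : ℂ) * kk δ ρ * (1 / (s - ρ) - 1 / (s - ρ + 1))‖ ≤ 27 * ((mz ρ : ℝ) * (ww δ ρ.im * kap (t - ρ.im))) := by
    intro ρ hρ
    rw [Finset.mem_sdiff] at hρ
    have b1 := (hS ρ hρ.1).2
    have b2 := hSt2 ρ hρ.1 hρ.2
    have c1 : (s - ρ).re = s.re - 1/2 := by simp [b1]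
    have c1' : (s - ρ).im = t - ρ.im := by simp [ht]
    have c2 : s - ρ ≠ 0 := fun h => by rw [h] at c1; simp at c1; linarith
    have c3 : 1 ≤ ‖s - ρ + 1‖ := by
      refine le_trans ?_ (Complex.re_le_norm _)
      simp only [Complex.add_re, c1, Complex.one_re]; linarith
    have c4 : s - ρ + 1 ≠ 0 := fun h => by rw [h] at c3; simp at c3; linarith
    have e : (mz ρ : ℂ) * kk δ ρ * (1 / (s - ρ) - 1 / (s - ρ + 1)) =
        (mz ρ : ℂ) * (kk δ ρ / ((s - ρ) * (s - ρ + 1))) := by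
      field_simp; ring
    rw [e, norm_mul, Complex.norm_natCast, mul_left_comm]
    refine mul_le_mul_of_nonneg_left ?_ (by positivity)
    rw [norm_div, norm_mul]
    have k1 := kk_ww hδ h1 ρ (by rw [b1]) (by rw [b1]; norm_num)
    have x1 := im_le_norm_sq (s - ρ)
    have x2 := im_le_norm_sq (s - ρ + 1)
    rw [c1, c1'] at x1
    simp only [Complex.add_re, Complex.add_im, c1, c1', Complex.one_re, Complex.one_im] at x2
    set x := t - ρ.im
    have y1 : (1 + x^2)/5 ≤ ‖s - ρ‖^2 := by nlinarith [sq_nonneg (s.re - 1/2)]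
    have y2 : 1 + x^2 ≤ ‖s - ρ + 1‖^2 := by nlinarith
    have y3 : (1 + x^2)/3 ≤ ‖s - ρ‖ * ‖s - ρ + 1‖ := by
      refine (pow_le_pow_iff_left₀ (by positivity) (by positivity) two_ne_zero).1 ?_
      rw [mul_pow]
      have := mul_le_mul y1 y2 (by positivity) (by positivity)
      nlinarith [sq_nonneg (1+x^2)]
    have y4 : 0 < (1 + x^2)/3 := by positivity
    rw [div_le_iff₀ (by linarith)]
    have hwr := ww_pos hδ ρ.im
    calc ‖kk δ ρ‖ ≤ 9 * ww δ ρ.im := k1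
      _ = 27 * (ww δ ρ.im * kap x) * ((1+x^2)/3) := by unfold kap; field_simp; ring
      _ ≤ _ := by
        have := kap_pos x
        gcongr
  have tC : ∀ ρ ∈ St t \ S, ‖kk δ s * ((mz ρ : ℂ) / (s - ρ))‖ ≤ (mz ρ : ℝ) * (9 * ww δ t / η) := by
    intro ρ hρ
    rw [Finset.mem_sdiff] at hρ
    obtain ⟨b1, b2⟩ := hSt ρ hρ.1
    have c1 : (s - ρ).re = s.re - 1/2 := by simp [b1]
    have c3 : η ≤ ‖s - ρ‖ := by
      refine le_trans ?_ (Complex.re_le_norm _)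
      rw [c1]; linarith
    rw [norm_mul, norm_div, Complex.norm_natCast, mul_div_assoc', mul_comm, mul_div_assoc]
    gcongr
  have sA := norm_sum_le_of_le _ tA
  have sB := norm_sum_le_of_le _ tB
  have sC := norm_sum_le_of_le _ tC
  have hcr : ((∑ ρ ∈ St t, (mz ρ : ℝ))) ≤ 81 * ell t := by exact_mod_cast hc
  have uA : ∑ ρ ∈ S ∩ St t, (mz ρ : ℝ) * (42 * ww δ t) ≤ 3402 * (ww δ t * ell t) := by
    rw [← Finset.sum_mul]
    have : ∑ ρ ∈ S ∩ St t, (mz ρ : ℝ) ≤ ∑ ρ ∈ St t, (mz ρ : ℝ) :=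
      Finset.sum_le_sum_of_subset_of_nonneg Finset.inter_subset_right fun _ _ _ => by positivity
    nlinarith
  have uB : ∑ ρ ∈ S \ St t, 27 * ((mz ρ : ℝ) * (ww δ ρ.im * kap (t - ρ.im))) ≤ 27 * FF δ S t := by
    rw [← Finset.mul_sum]
    refine mul_le_mul_of_nonneg_left ?_ (by norm_num)
    refine Finset.sum_le_sum_of_subset_of_nonneg Finset.sdiff_subset fun ρ _ _ => ?_
    have := ww_pos hδ ρ.im
    have := kap_pos (t - ρ.im)
    positivity
  have uC : ∑ ρ ∈ St t \ S, (mz ρ : ℝ) * (9 * ww δ t / η) ≤ RR δ η T t := by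
    unfold RR
    split_ifs with hT
    · rw [← Finset.sum_mul]
      have : ∑ ρ ∈ St t \ S, (mz ρ : ℝ) ≤ ∑ ρ ∈ St t, (mz ρ : ℝ) :=
        Finset.sum_le_sum_of_subset_of_nonneg Finset.sdiff_subset fun _ _ _ => by positivity
      calc _ ≤ (81 * ell t) * (9 * ww δ t / η) := by gcongr; linarith
        _ = _ := by ring
    · have : St t \ S = ∅ := by
        rw [Finset.sdiff_eq_empty_iff_subset]
        intro ρ hρ
        obtain ⟨b1, b2⟩ := hSt ρ hρ
        refine hST ρ ((mem_St t ρ).1 hρ).2 b1 ?_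
        have := abs_add_le (ρ.im - t) t
        rw [sub_add_cancel] at this
        linarith
      rw [this]; simp
  have dec : EE δ S s = -(kk δ s * (deriv zf s / zf s - ∑ ρ ∈ St t, (mz ρ : ℂ) / (s - ρ))) + dslope (kk δ) 1 s +
      ∑ ρ ∈ S ∩ St t, ((mz ρ : ℂ) * kk δ ρ * (1 / (s - ρ) - 1 / (s - ρ + 1)) - kk δ s * ((mz ρ : ℂ) / (s - ρ))) +
      ∑ ρ ∈ S \ St t, (mz ρ : ℂ) * kk δ ρ * (1 / (s - ρ) - 1 / (s - ρ + 1)) -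
      ∑ ρ ∈ St t \ S, kk δ s * ((mz ρ : ℂ) / (s - ρ)) := by
    rw [EE, ← Finset.sum_inter_add_sum_sdiff S (St t), ← Finset.sum_inter_add_sum_sdiff (St t) S, Finset.inter_comm (St t) S,
      Finset.sum_sub_distrib, ← Finset.mul_sum, ← Finset.mul_sum]
    ring
  rw [dec]
  have v1 : ‖kk δ s * (deriv zf s / zf s - ∑ ρ ∈ St t, (mz ρ : ℂ) / (s - ρ))‖ ≤ 3600000 * (ww δ t * ell t) := by
    rw [norm_mul]
    calc _ ≤ (9 * ww δ t) * (400000 * ell t) := by gcongr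
      _ = _ := by ring
  have v2 := ds_le hδ h1 s (by linarith) hs2
  have v3 : ww δ t ≤ ww δ t * ell t := by nlinarith
  refine (norm_sub_le _ _).trans ?_
  have w1 := norm_add_le (-(kk δ s * (deriv zf s / zf s - ∑ ρ ∈ St t, (mz ρ : ℂ) / (s - ρ))) + dslope (kk δ) 1 s +
      ∑ ρ ∈ S ∩ St t, ((mz ρ : ℂ) * kk δ ρ * (1 / (s - ρ) - 1 / (s - ρ + 1)) - kk δ s * ((mz ρ : ℂ) / (s - ρ)))) (∑ ρ ∈ S \ St t, (mz ρ : ℂ) * kk δ ρ * (1 / (s - ρ) - 1 / (s - ρ + 1)))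
  have w2 := norm_add_le (-(kk δ s * (deriv zf s / zf s - ∑ ρ ∈ St t, (mz ρ : ℂ) / (s - ρ))) + dslope (kk δ) 1 s) (
      ∑ ρ ∈ S ∩ St t, ((mz ρ : ℂ) * kk δ ρ * (1 / (s - ρ) - 1 / (s - ρ + 1)) - kk δ s * ((mz ρ : ℂ) / (s - ρ))))
  have w3 := norm_add_le (-(kk δ s * (deriv zf s / zf s - ∑ ρ ∈ St t, (mz ρ : ℂ) / (s - ρ)))) (dslope (kk δ) 1 s)
  rw [norm_neg] at w3
  linarith

lemma EE_da (hRH : RiemannHypothesis) (δ : ℝ) (S : Finset ℂ) (hS : ∀ ρ ∈ S, zf ρ = 0 ∧ ρ.re = 1/2)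
    (s : ℂ) (hs : 1/2 < s.re) : DifferentiableAt ℂ (EE δ S) s := by
  have hzs : zf s ≠ 0 := fun h => by
    have := zf_RH hRH h (by linarith)
    linarith
  unfold EE
  have d0 : DifferentiableAt ℂ (deriv zf) s := (zf_diff.analyticAt s).deriv.differentiableAt
  refine ((((kk_da δ s (ne_zero_of_re hs.le)).mul (d0.div (zf_diff s) hzs)).neg).add (ds_da δ s hs)).add ?_
  refine DifferentiableAt.fun_sum fun ρ hρ => ?_
  have c1 : (s - ρ).re = s.re - 1/2 := by simp [(hS ρ hρ).2]
  have c2 : s - ρ ≠ 0 := fun h => by rw [h] at c1; simp at c1; linarith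
  have c4 : s - ρ + 1 ≠ 0 := fun h => by
    have : (s - ρ + 1).re = s.re - 1/2 + 1 := by rw [Complex.add_re, c1]; simp
    rw [h] at this; simp at this; linarith
  refine DifferentiableAt.const_mul ?_ _
  have e1 : DifferentiableAt ℂ (fun z : ℂ => 1 / (z - ρ)) s :=
    (differentiableAt_const _).div (differentiableAt_id.sub_const ρ) c2
  have e2 : DifferentiableAt ℂ (fun z : ℂ => 1 / (z - ρ + 1)) s :=
    (differentiableAt_const _).div ((differentiableAt_id.sub_const ρ).add_const 1) c4
  exact e1.sub e2

lemma FF_sq {δ : ℝ} (hδ : 0 < δ) (S : Finset ℂ) (hS : ∀ ρ ∈ S, zf ρ = 0 ∧ ρ.re = 1/2) (t : ℝ) :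
    FF δ S t ^ 2 ≤ 972 * J0 * ∑ ρ ∈ S, (mz ρ : ℝ) * ww δ ρ.im ^ 2 * (kap (t - ρ.im) * ell t) := by
  have h := Finset.sum_sq_le_sum_mul_sum_of_sq_eq_mul S (r := fun ρ => (mz ρ : ℝ) * (ww δ ρ.im * kap (t - ρ.im)))
    (f := fun ρ => (mz ρ : ℝ) * kap (t - ρ.im)) (g := fun ρ => (mz ρ : ℝ) * ww δ ρ.im ^ 2 * kap (t - ρ.im))
    (fun ρ _ => by have := kap_pos (t - ρ.im); positivity) (fun ρ _ => by have := kap_pos (t - ρ.im); positivity)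
    (fun ρ _ => by ring)
  refine h.trans ?_
  have h2 := sum_kap S hS t
  calc _ ≤ (972 * J0 * ell t) * ∑ ρ ∈ S, (mz ρ : ℝ) * ww δ ρ.im ^ 2 * kap (t - ρ.im) := by
        refine mul_le_mul_of_nonneg_right h2 (Finset.sum_nonneg fun ρ _ => ?_)
        have := kap_pos (t - ρ.im); positivity
    _ = _ := by
      rw [mul_assoc, Finset.mul_sum]
      congr 1; refine Finset.sum_congr rfl fun ρ _ => by ring

lemma FFm_int (δ : ℝ) (S : Finset ℂ) :
    Integrable (fun t => ∑ ρ ∈ S, (mz ρ : ℝ) * ww δ ρ.im ^ 2 * (kap (t - ρ.im) * ell t)) :=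
  integrable_finsetSum S fun ρ _ => (kap_ell_int ρ.im).const_mul _

lemma FFm_bound {δ : ℝ} (hδ : 0 < δ) (h1 : δ ≤ 1) (S : Finset ℂ) (hS : ∀ ρ ∈ S, zf ρ = 0 ∧ ρ.re = 1/2) :
    ∫ t, ∑ ρ ∈ S, (mz ρ : ℝ) * ww δ ρ.im ^ 2 * (kap (t - ρ.im) * ell t) ≤ 10368 * J0 ^ 2 * (δ * Real.log (2/δ) ^ 2) := by
  rw [integral_finsetSum S fun ρ _ => (kap_ell_int ρ.im).const_mul _]
  have h := sum_w2 S hS hδ h1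
  have hJ := J0_nonneg
  calc _ ≤ ∑ ρ ∈ S, (4 * J0) * ((mz ρ : ℝ) * (ww δ ρ.im ^ 2 * ell ρ.im)) := by
        refine Finset.sum_le_sum fun ρ _ => ?_
        rw [integral_const_mul]
        have := mul_le_mul_of_nonneg_left (kap_ell_bound ρ.im) (by positivity : 0 ≤ (mz ρ : ℝ) * ww δ ρ.im ^ 2)
        linarith
    _ ≤ (4 * J0) * (2592 * J0 * (δ * Real.log (2/δ) ^ 2)) := by
        rw [← Finset.mul_sum]; gcongr
    _ = _ := by ring

lemma abs_add3_atTop : Tendsto (fun t : ℝ => |t| + 3) atTop atTop :=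
  tendsto_atTop_add_const_right _ _ tendsto_abs_atTop_atTop
lemma abs_add3_atBot : Tendsto (fun t : ℝ => |t| + 3) atBot atTop :=
  tendsto_atTop_add_const_right _ _ tendsto_abs_atBot_atTop

lemma wl_tendsto {δ : ℝ} (hδ : 0 < δ) (h1 : δ ≤ 1) (l : Filter ℝ) (hl : Tendsto (fun t : ℝ => |t| + 3) l atTop) :
    Tendsto (fun t => ww δ t * ell t) l (𝓝 0) := by
  have h0 : Tendsto (fun y : ℝ => 3 * (Real.log y / y)) atTop (𝓝 0) := by
    have := Real.isLittleO_log_id_atTop.tendsto_div_nhds_zero.const_mul 3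
    simpa using this
  refine squeeze_zero (fun t => (mul_pos (ww_pos hδ t) (ell_pos t)).le) (fun t => ?_) (h0.comp hl)
  have := ww_le hδ h1 t
  have hp := ell_pos t
  have ha := abs_nonneg t
  have e : ((fun y : ℝ => 3 * (Real.log y / y)) ∘ fun t => |t| + 3) t = 3 * (ell t / (|t| + 3)) := rfl
  rw [e]
  calc _ ≤ 1 / (1 + |t|) * ell t := by gcongr
    _ ≤ 3 / (|t| + 3) * ell t := by
      refine mul_le_mul_of_nonneg_right ?_ hp.le
      rw [div_le_div_iff₀ (by positivity) (by positivity)]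
      linarith
    _ = _ := by ring

lemma kap_tendsto (a : ℝ) (l : Filter ℝ) (hl : Tendsto (fun t : ℝ => |t| + 3) l atTop) :
    Tendsto (fun t => kap (t - a)) l (𝓝 0) := by
  have h0 : Tendsto (fun y : ℝ => (4 + |a|) * y⁻¹) atTop (𝓝 0) := by
    have := tendsto_inv_atTop_zero (𝕜 := ℝ) |>.const_mul (4 + |a|)
    simpa using this
  refine squeeze_zero (fun t => (kap_pos _).le) (fun t => ?_) (h0.comp hl)
  show kap (t - a) ≤ (4 + |a|) * (|t| + 3)⁻¹
  have ha := abs_nonneg t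
  have ha' := abs_nonneg a
  unfold kap
  rw [← div_eq_mul_inv, div_le_div_iff₀ (by positivity) (by positivity)]
  have h2 : |t| ≤ |t - a| + |a| := by simpa using abs_add_le (t - a) a
  have h3 : |t - a| ≤ 1 + (t - a)^2 := by rw [← sq_abs]; nlinarith [sq_nonneg (|t-a| - 1)]
  nlinarith [mul_nonneg ha' (sq_nonneg (t-a)), sq_nonneg (t-a)]

lemma tail_small {δ : ℝ} (hδ : 0 < δ) (h1 : δ ≤ 1) (η ε : ℝ) (hε : 0 < ε) :
    ∃ T : ℝ, Integrable (fun t => RR δ η T t ^ 2) ∧ ∫ t, RR δ η T t ^ 2 ≤ ε := by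
  have hw := (w2_int hδ h1).const_mul ((729/η)^2)
  have hm : ∀ n : ℕ, AEStronglyMeasurable (fun t => RR δ η (n:ℝ) t ^ 2) := by
    intro n
    have h : Measurable (RR δ η (n:ℝ)) := by
      unfold RR
      refine Measurable.ite (measurableSet_lt measurable_const (by fun_prop)) ?_ measurable_const
      have := (ww_cont hδ).mul ell_cont
      exact (this.const_mul _).measurable
    exact (h.pow_const 2).aestronglyMeasurable
  have hb : ∀ (n : ℕ) (t : ℝ), ‖RR δ η (n:ℝ) t ^ 2‖ ≤ (729/η)^2 * (ww δ t ^ 2 * ell t ^ 2) := by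
    intro n t
    rw [Real.norm_of_nonneg (by positivity)]
    unfold RR
    split_ifs
    · apply le_of_eq; ring
    · simp; positivity
  have h := tendsto_integral_of_dominated_convergence (F := fun (n : ℕ) (t : ℝ) => RR δ η (n:ℝ) t ^ 2) (f := fun _ => (0:ℝ)) _ hm hw
    (fun n => Eventually.of_forall (hb n)) (Eventually.of_forall fun t => by
      apply tendsto_const_nhds.congr'
      obtain ⟨N, hN⟩ := exists_nat_gt (|t| + 1)
      filter_upwards [eventually_ge_atTop N] with n hn
      have : (N:ℝ) ≤ n := by exact_mod_cast hn
      rw [RR, if_neg (by linarith)]; simp)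
  rw [integral_zero] at h
  obtain ⟨n, hn⟩ := (h.eventually (gt_mem_nhds hε)).exists
  exact ⟨n, hw.mono' (hm n) (Eventually.of_forall (hb n)), hn.le⟩

noncomputable def KE : ℝ := 3 * (16000000000000 * (4 * J0) + 729 * (972 * J0 * (10368 * J0 ^ 2)) + 1)

lemma main8 (hRH : RiemannHypothesis) {δ : ℝ} (hδ : 0 < δ) (h1 : δ ≤ 1) {η : ℝ} (hη : 0 < η) (hη1 : η ≤ 1/2) :
    ∃ S : Finset ℂ, (∀ ρ ∈ S, zf ρ = 0 ∧ ρ.re = 1/2) ∧ ∀ V : ℝ, 0 ≤ V →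
      ∫ u in (0:ℝ)..V, ‖qq δ S u‖^2 * Real.exp (-2*(1/2+η)*u) ≤ KE * (δ * Real.log (2/δ)^2) := by
  have hlog : 0 < Real.log (2/δ) := Real.log_pos (by rw [lt_div_iff₀ hδ]; linarith)
  obtain ⟨T, hTi, hT⟩ := tail_small hδ h1 η (δ * Real.log (2/δ)^2) (by positivity)
  classical
  let S : Finset ℂ := (zf_fin (1/2) T).toFinset.filter (fun ρ => ρ.re = 1/2)
  have hS : ∀ ρ ∈ S, zf ρ = 0 ∧ ρ.re = 1/2 := by
    intro ρ hρ
    simp only [S, Finset.mem_filter, Set.Finite.mem_toFinset, Set.mem_setOf_eq] at hρ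
    exact ⟨hρ.1.2, hρ.2⟩
  have hST : ∀ ρ, zf ρ = 0 → ρ.re = 1/2 → |ρ.im| ≤ T → ρ ∈ S := by
    intro ρ a b c
    simp only [S, Finset.mem_filter, Set.Finite.mem_toFinset, Set.mem_setOf_eq]
    refine ⟨⟨?_, a⟩, b⟩
    rw [dist_eq_norm]
    have : ρ - 1/2 = (ρ.im : ℂ) * Complex.I := by apply Complex.ext <;> simp [b]
    rw [this]; simpa using c
  refine ⟨S, hS, fun V hV => ?_⟩
  have hbd := EE_bd hRH hδ h1 hη T S hS hST
  obtain ⟨C, hC⟩ := qq_bd hδ h1 S hS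
  have hJ := J0_nonneg
  let G : ℝ → ℝ := fun t => 3 * (16000000000000 * (ww δ t ^ 2 * ell t ^ 2) +
    729 * (972 * J0 * ∑ ρ ∈ S, (mz ρ : ℝ) * ww δ ρ.im ^ 2 * (kap (t - ρ.im) * ell t)) + RR δ η T t ^ 2)
  have i1 : Integrable (fun t => 16000000000000 * (ww δ t ^ 2 * ell t ^ 2)) := (w2_int hδ h1).const_mul _
  have i2 : Integrable (fun t => 729 * (972 * J0 * ∑ ρ ∈ S, (mz ρ : ℝ) * ww δ ρ.im ^ 2 * (kap (t - ρ.im) * ell t))) :=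
    ((FFm_int δ S).const_mul _).const_mul _
  have hGi : Integrable G := ((i1.add i2).add hTi).const_mul 3
  have hGv : ∫ t, G t ≤ KE * (δ * Real.log (2/δ)^2) := by
    simp only [G]
    have i3 : Integrable (fun t => 16000000000000 * (ww δ t ^ 2 * ell t ^ 2) + 729 * (972 * J0 * ∑ ρ ∈ S, (mz ρ : ℝ) * ww δ ρ.im ^ 2 * (kap (t - ρ.im) * ell t))) := i1.add i2
    rw [integral_const_mul, integral_add i3 hTi, integral_add i1 i2, integral_const_mul, integral_const_mul, integral_const_mul]
    have a1 := w2_bound hδ h1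
    have a2 := FFm_bound hδ h1 S hS
    have a3 := mul_le_mul_of_nonneg_left a2 (by positivity : 0 ≤ 972 * J0)
    unfold KE
    linarith
  have hline : ∀ t : ℝ, (((1/2 + η : ℝ) : ℂ) + t * Complex.I).re = 1/2 + η ∧ (((1/2 + η : ℝ) : ℂ) + t * Complex.I).im = t := by
    intro t; constructor <;> simp
  have hEG : ∀ t : ℝ, ‖EE δ S (((1/2 + η : ℝ) : ℂ) + t * Complex.I)‖^2 ≤ G t := by
    intro t
    have b := hbd (((1/2 + η : ℝ) : ℂ) + t * Complex.I) (by rw [(hline t).1]) (by rw [(hline t).1]; linarith)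
    rw [(hline t).2] at b
    have f := FF_sq hδ S hS t
    have b2 := pow_le_pow_left₀ (norm_nonneg _) b 2
    refine b2.trans ?_
    simp only [G]
    have sq3 : ∀ a b c : ℝ, (a + b + c)^2 ≤ 3 * (a^2 + b^2 + c^2) := fun a b c => by
      nlinarith [sq_nonneg (a-b), sq_nonneg (b-c), sq_nonneg (a-c)]
    refine (sq3 _ _ _).trans ?_
    have e1 : (4000000 * (ww δ t * ell t))^2 = 16000000000000 * (ww δ t ^ 2 * ell t ^ 2) := by ring
    have e2 : (27 * FF δ S t)^2 = 729 * FF δ S t ^ 2 := by ring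
    rw [e1, e2]
    gcongr
  have hcont : Continuous (fun t : ℝ => EE δ S (((1/2 + η : ℝ) : ℂ) + t * Complex.I)) := by
    rw [continuous_iff_continuousAt]
    intro t
    have := (EE_da hRH δ S hS (((1/2 + η : ℝ) : ℂ) + t * Complex.I) (by rw [(hline t).1]; linarith)).continuousAt
    exact ContinuousAt.comp (f := fun t : ℝ => (((1/2 + η : ℝ) : ℂ) + t * Complex.I)) this (by fun_prop)
  have hL2 : Integrable (fun t : ℝ => ‖EE δ S (((1/2 + η : ℝ) : ℂ) + t * Complex.I)‖^2) := by
    refine hGi.mono' (hcont.norm.pow 2).aestronglyMeasurable (Eventually.of_forall fun t => ?_)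
    rw [Real.norm_of_nonneg (by positivity)]
    exact hEG t
  let B : ℝ → ℝ := fun t => 4000000 * (ww δ t * ell t) + 27 * FF δ S t + 729 / η * (ww δ t * ell t)
  have hB : ∀ l : Filter ℝ, Tendsto (fun t : ℝ => |t| + 3) l atTop → Tendsto B l (𝓝 0) := by
    intro l hl
    have w := wl_tendsto hδ h1 l hl
    have f : Tendsto (FF δ S) l (𝓝 0) := by
      unfold FF
      have := tendsto_finsetSum S (fun ρ _ => ((kap_tendsto ρ.im l hl).const_mul (ww δ ρ.im)).const_mul (mz ρ : ℝ))
      simpa using this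
    have := ((w.const_mul 4000000).add (f.const_mul 27)).add (w.const_mul (729/η))
    simpa [B] using this
  have hp := pw (qq δ S) (EE δ S) (1/2 + η) (by linarith) (qq_meas δ S) (qq_neg hδ h1 S) C hC
    (fun s a _ => EE_da hRH δ S hS s (by linarith)) (qq_lap hδ h1 S hS) B (hB _ abs_add3_atTop) (hB _ abs_add3_atBot)
    (fun s a b => by
      refine (hbd s a b).trans ?_
      simp only [B]
      gcongr
      unfold RR
      split_ifs
      · exact le_rfl
      · have := ww_pos hδ s.im
        have := ell_pos s.im
        positivity) hL2 V hV
  refine hp.trans ?_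
  have hI : ∫ t : ℝ, ‖EE δ S (((1/2 + η : ℝ) : ℂ) + t * Complex.I)‖^2 ≤ ∫ t, G t := integral_mono hL2 hGi hEG
  have hI0 : 0 ≤ ∫ t : ℝ, ‖EE δ S (((1/2 + η : ℝ) : ℂ) + t * Complex.I)‖^2 := integral_nonneg fun t => by positivity
  have hpi : 1 / (2 * π) ≤ 1 := by
    rw [div_le_one (by positivity)]
    linarith [Real.pi_gt_three]
  nlinarith

end SV


namespace SV
open scoped Topology
open Filter Metric

lemma lap2 (a : ℝ) : Integrable (fun v : ℝ => Complex.exp (a * v * Complex.I) * (Real.exp (-2 * |v|) : ℝ)) ∧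
    ∫ v : ℝ, Complex.exp (a * v * Complex.I) * (Real.exp (-2 * |v|) : ℝ) = ((4 / (4 + a ^ 2) : ℝ) : ℂ) := by
  set f : ℝ → ℂ := fun v : ℝ => Complex.exp (a * v * Complex.I) * (Real.exp (-2 * |v|) : ℝ) with hf
  have r1 : (2 + a * Complex.I : ℂ).re = 2 := by simp
  have r2 : (-2 + a * Complex.I : ℂ).re = -2 := by simp
  have n1 : (2 + a * Complex.I : ℂ) ≠ 0 := fun h => by rw [h] at r1; simp at r1
  have n2 : (-2 + a * Complex.I : ℂ) ≠ 0 := fun h => by rw [h] at r2; simp at r2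
  have e1 : Set.EqOn f (fun v : ℝ => Complex.exp ((2 + a * Complex.I) * v)) (Set.Iic 0) := by
    intro v hv
    simp only [hf]
    rw [abs_of_nonpos hv, Complex.ofReal_exp, ← Complex.exp_add]
    congr 1; push_cast; ring
  have e2 : Set.EqOn f (fun v : ℝ => Complex.exp ((-2 + a * Complex.I) * v)) (Set.Ioi 0) := by
    intro v hv
    simp only [hf]
    rw [abs_of_pos hv, Complex.ofReal_exp, ← Complex.exp_add]
    congr 1; push_cast; ring
  have i1 : IntegrableOn f (Set.Iic 0) :=
    (integrableOn_exp_mul_complex_Iic (by rw [r1]; norm_num) 0).congr_fun e1.symm measurableSet_Iic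
  have i2 : IntegrableOn f (Set.Ioi 0) :=
    (integrableOn_exp_mul_complex_Ioi (by rw [r2]; norm_num) 0).congr_fun e2.symm measurableSet_Ioi
  refine ⟨?_, ?_⟩
  · rw [← integrableOn_univ, ← Set.Iic_union_Ioi (a := (0:ℝ))]
    exact i1.union i2
  · rw [← intervalIntegral.integral_Iic_add_Ioi i1 i2, setIntegral_congr_fun measurableSet_Iic e1, setIntegral_congr_fun measurableSet_Ioi e2,
      integral_exp_mul_complex_Iic (by rw [r1]; norm_num), integral_exp_mul_complex_Ioi (by rw [r2]; norm_num)]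
    have n3 : (4 + (a:ℂ)^2) ≠ 0 := by
      have : (0:ℝ) < 4 + a^2 := by positivity
      exact_mod_cast this.ne'
    push_cast
    simp only [mul_zero, Complex.exp_zero]
    field_simp
    ring_nf
    rw [Complex.I_sq]
    ring

noncomputable def DD (S : Finset ℂ) (c : ℂ → ℂ) (v : ℝ) : ℂ := ∑ ρ ∈ S, c ρ * Complex.exp (ρ.im * v * Complex.I)

lemma DD_cont (S : Finset ℂ) (c : ℂ → ℂ) : Continuous (DD S c) := by
  unfold DD; fun_prop

lemma DD_lap (S : Finset ℂ) (c : ℂ → ℂ) : Integrable (fun v : ℝ => ‖DD S c v‖ ^ 2 * Real.exp (-2 * |v|)) ∧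
    ∫ v : ℝ, ‖DD S c v‖ ^ 2 * Real.exp (-2 * |v|) ≤ ∑ ρ ∈ S, ∑ ρ' ∈ S, ‖c ρ‖ * ‖c ρ'‖ * (4 * kap (ρ.im - ρ'.im)) := by
  have e : ∀ v : ℝ, ((‖DD S c v‖ ^ 2 * Real.exp (-2 * |v|) : ℝ) : ℂ) =
      ∑ ρ ∈ S, ∑ ρ' ∈ S, (c ρ * (starRingEnd ℂ) (c ρ')) * (Complex.exp (((ρ.im - ρ'.im : ℝ) : ℂ) * v * Complex.I) * (Real.exp (-2 * |v|) : ℝ)) := by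
    intro v
    have : ((‖DD S c v‖ ^ 2 : ℝ) : ℂ) = DD S c v * (starRingEnd ℂ) (DD S c v) := by
      rw [Complex.mul_conj, Complex.normSq_eq_norm_sq]
    rw [Complex.ofReal_mul, this, DD, map_sum, Finset.sum_mul_sum, Finset.sum_mul]
    refine Finset.sum_congr rfl fun ρ _ => ?_
    rw [Finset.sum_mul]
    refine Finset.sum_congr rfl fun ρ' _ => ?_
    rw [map_mul, ← Complex.exp_conj]
    have : Complex.exp (((ρ.im - ρ'.im : ℝ) : ℂ) * v * Complex.I) = Complex.exp (ρ.im * v * Complex.I) * Complex.exp ((starRingEnd ℂ) (ρ'.im * v * Complex.I)) := by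
      rw [← Complex.exp_add]; congr 1
      simp only [map_mul, Complex.conj_ofReal, Complex.conj_I]; push_cast; ring
    rw [this]; ring
  have hi : ∀ ρ ρ' : ℂ, Integrable (fun v : ℝ => (c ρ * (starRingEnd ℂ) (c ρ')) * (Complex.exp (((ρ.im - ρ'.im : ℝ) : ℂ) * v * Complex.I) * (Real.exp (-2 * |v|) : ℝ))) :=
    fun ρ ρ' => (lap2 _).1.const_mul _
  have hI : Integrable (fun v : ℝ => ((‖DD S c v‖ ^ 2 * Real.exp (-2 * |v|) : ℝ) : ℂ)) := by
    simp_rw [e]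
    exact integrable_finsetSum S fun ρ _ => integrable_finsetSum S fun ρ' _ => hi ρ ρ'
  refine ⟨hI.re, ?_⟩
  refine (Real.le_norm_self _).trans ?_
  rw [← Complex.norm_real, ← integral_complex_ofReal]
  simp_rw [e]
  rw [integral_finsetSum S fun ρ _ => integrable_finsetSum S fun ρ' _ => hi ρ ρ']
  refine norm_sum_le_of_le S fun ρ _ => ?_
  rw [integral_finsetSum S fun ρ' _ => hi ρ ρ']
  refine norm_sum_le_of_le S fun ρ' _ => ?_
  rw [integral_const_mul, (lap2 _).2, norm_mul, norm_mul, RCLike.norm_conj, Complex.norm_real, Real.norm_of_nonneg (by positivity)]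
  refine mul_le_mul_of_nonneg_left ?_ (by positivity)
  unfold kap
  rw [mul_one_div]
  gcongr
  norm_num

lemma DD_bound (S : Finset ℂ) (hS : ∀ ρ ∈ S, zf ρ = 0 ∧ ρ.re = 1/2) {δ : ℝ} (hδ : 0 < δ) (h1 : δ ≤ 1) (c : ℂ → ℂ)
    (hc : ∀ ρ ∈ S, ‖c ρ‖ ≤ (mz ρ : ℝ) * (9 * ww δ ρ.im)) :
    ∫ v : ℝ, ‖DD S c v‖ ^ 2 * Real.exp (-2 * |v|) ≤ 816293376 * J0 ^ 2 * (δ * Real.log (2/δ)^2) := by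
  refine (DD_lap S c).2.trans ?_
  have hJ := J0_nonneg
  have ke : ∀ x y : ℝ, kap (x - y) = kap (y - x) := fun x y => by unfold kap; congr 2; ring
  have s1 : ∑ ρ ∈ S, ∑ ρ' ∈ S, ‖c ρ‖ * ‖c ρ'‖ * (4 * kap (ρ.im - ρ'.im)) ≤
      ∑ ρ ∈ S, ∑ ρ' ∈ S, (162 * ((mz ρ : ℝ) * ww δ ρ.im ^ 2 * ((mz ρ' : ℝ) * kap (ρ.im - ρ'.im))) + 162 * ((mz ρ' : ℝ) * ww δ ρ'.im ^ 2 * ((mz ρ : ℝ) * kap (ρ'.im - ρ.im)))) := by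
    refine Finset.sum_le_sum fun ρ hρ => Finset.sum_le_sum fun ρ' hρ' => ?_
    have k := kap_pos (ρ.im - ρ'.im)
    have w1 := ww_pos hδ ρ.im
    have w2 := ww_pos hδ ρ'.im
    have h := mul_le_mul (hc ρ hρ) (hc ρ' hρ') (norm_nonneg _) (by positivity)
    refine (mul_le_mul_of_nonneg_right h (by positivity)).trans ?_
    rw [ke ρ'.im ρ.im]
    have : 0 ≤ ((mz ρ : ℝ) * (mz ρ' : ℝ) * kap (ρ.im - ρ'.im)) * (ww δ ρ.im - ww δ ρ'.im)^2 := by positivity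
    nlinarith
  have s2 : ∑ ρ ∈ S, ∑ ρ' ∈ S, (mz ρ : ℝ) * ww δ ρ.im ^ 2 * ((mz ρ' : ℝ) * kap (ρ.im - ρ'.im)) ≤ 2519424 * J0 ^ 2 * (δ * Real.log (2/δ)^2) := by
    calc _ ≤ ∑ ρ ∈ S, (972 * J0) * ((mz ρ : ℝ) * (ww δ ρ.im ^ 2 * ell ρ.im)) := by
          refine Finset.sum_le_sum fun ρ _ => ?_
          rw [← Finset.mul_sum]
          have := mul_le_mul_of_nonneg_left (sum_kap S hS ρ.im) (by positivity : 0 ≤ (mz ρ : ℝ) * ww δ ρ.im ^ 2)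
          linarith
      _ ≤ (972 * J0) * (2592 * J0 * (δ * Real.log (2/δ) ^ 2)) := by
          rw [← Finset.mul_sum]
          exact mul_le_mul_of_nonneg_left (sum_w2 S hS hδ h1) (by positivity)
      _ = _ := by ring
  refine s1.trans ?_
  simp_rw [Finset.sum_add_distrib, ← Finset.mul_sum]
  rw [Finset.sum_comm (f := fun ρ ρ' => (mz ρ' : ℝ) * ww δ ρ'.im ^ 2 * ((mz ρ : ℝ) * kap (ρ'.im - ρ.im)))]
  simp_rw [← Finset.mul_sum] at s2 ⊢
  linarith

noncomputable def AA (δ : ℝ) (S : Finset ℂ) (u : ℝ) : ℂ :=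
  ∑ ρ ∈ S, (mz ρ : ℂ) * kk δ ρ * (Complex.exp (ρ * u) - Complex.exp ((ρ - 1) * u))

lemma AA_norm (δ : ℝ) (S : Finset ℂ) (hS : ∀ ρ ∈ S, zf ρ = 0 ∧ ρ.re = 1/2) (L u : ℝ) (hu : 0 ≤ u) (huL : u ≤ L) :
    ‖AA δ S u‖ ^ 2 * Real.exp u ≤ Real.exp (2 * L) *
      (‖DD S (fun ρ => (mz ρ : ℂ) * kk δ ρ * Complex.exp (ρ.im * L * Complex.I)) (u - L)‖ ^ 2 * Real.exp (-2 * |u - L|)) := by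
  set D := DD S (fun ρ => (mz ρ : ℂ) * kk δ ρ * Complex.exp (ρ.im * L * Complex.I)) (u - L) with hD
  have e : AA δ S u = ((Real.exp (u/2) - Real.exp (-(u/2)) : ℝ) : ℂ) * D := by
    rw [hD, DD, AA, Finset.mul_sum]
    refine Finset.sum_congr rfl fun ρ hρ => ?_
    have hr : ρ = 1/2 + ρ.im * Complex.I := by
      apply Complex.ext <;> simp [(hS ρ hρ).2]
    have a1 : Complex.exp (ρ * u) = Complex.exp ((u:ℂ)/2) * (Complex.exp (ρ.im * L * Complex.I) * Complex.exp (ρ.im * (u - L : ℝ) * Complex.I)) := by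
      rw [← Complex.exp_add, ← Complex.exp_add]
      congr 1
      conv_lhs => rw [hr]
      push_cast; ring
    have a2 : Complex.exp ((ρ - 1) * u) = Complex.exp (-((u:ℂ)/2)) * (Complex.exp (ρ.im * L * Complex.I) * Complex.exp (ρ.im * (u - L : ℝ) * Complex.I)) := by
      rw [← Complex.exp_add, ← Complex.exp_add]
      congr 1
      conv_lhs => rw [hr]
      push_cast; ring
    rw [a1, a2]
    push_cast
    ring
  rw [e, norm_mul, Complex.norm_real, abs_of_nonpos (by linarith : u - L ≤ 0), mul_pow]
  have b1 : |Real.exp (u/2) - Real.exp (-(u/2))| ≤ Real.exp (u/2) := by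
    rw [abs_of_nonneg (sub_nonneg.2 (Real.exp_le_exp.2 (by linarith)))]
    linarith [Real.exp_pos (-(u/2))]
  have b2 : ‖Real.exp (u/2) - Real.exp (-(u/2))‖ ^ 2 ≤ Real.exp u := by
    rw [Real.norm_eq_abs]
    refine (pow_le_pow_left₀ (abs_nonneg _) b1 2).trans (le_of_eq ?_)
    rw [← Real.exp_nat_mul]; congr 1; push_cast; ring
  calc _ ≤ Real.exp u * ‖D‖^2 * Real.exp u := by gcongr
    _ = ‖D‖^2 * (Real.exp (2*L) * Real.exp (-2 * -(u - L))) := by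
      rw [← Real.exp_add, mul_comm (Real.exp u), mul_assoc, ← Real.exp_add]; congr 2; ring
    _ = _ := by ring

lemma AA_int {δ : ℝ} (hδ : 0 < δ) (h1 : δ ≤ 1) (S : Finset ℂ) (hS : ∀ ρ ∈ S, zf ρ = 0 ∧ ρ.re = 1/2) (L : ℝ) :
    ∫ u in Set.Ioc 0 L, ‖AA δ S u‖ ^ 2 * Real.exp u ≤ Real.exp (2 * L) * (816293376 * J0 ^ 2 * (δ * Real.log (2/δ)^2)) := by
  set c : ℂ → ℂ := (fun ρ => (mz ρ : ℂ) * kk δ ρ * Complex.exp (ρ.im * L * Complex.I)) with hc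
  have hi := (DD_lap S c).1
  have hb := DD_bound S hS hδ h1 c (fun ρ hρ => by
    have r := (hS ρ hρ).2
    have : ‖Complex.exp (ρ.im * L * Complex.I)‖ = 1 := by
      rw [← Complex.ofReal_mul, Complex.norm_exp_ofReal_mul_I]
    rw [hc]
    simp only [norm_mul, this, Complex.norm_natCast, mul_one]
    gcongr
    exact kk_ww hδ h1 ρ (by rw [r]) (by rw [r]; norm_num))
  have hi2 := hi.comp_sub_right L
  have hi3 : Integrable (fun u : ℝ => Real.exp (2 * L) * (‖DD S c (u - L)‖ ^ 2 * Real.exp (-2 * |u - L|))) := hi2.const_mul _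
  calc _ ≤ ∫ u in Set.Ioc 0 L, Real.exp (2 * L) * (‖DD S c (u - L)‖ ^ 2 * Real.exp (-2 * |u - L|)) := by
        refine integral_mono_of_nonneg (Eventually.of_forall fun u => by positivity) hi3.integrableOn ?_
        filter_upwards [ae_restrict_mem measurableSet_Ioc] with u hu
        exact AA_norm δ S hS L u hu.1.le hu.2
    _ ≤ ∫ u, Real.exp (2 * L) * (‖DD S c (u - L)‖ ^ 2 * Real.exp (-2 * |u - L|)) :=
        setIntegral_le_integral hi3 (Eventually.of_forall fun u => by positivity)
    _ = Real.exp (2 * L) * ∫ v, ‖DD S c v‖ ^ 2 * Real.exp (-2 * |v|) := by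
        rw [integral_const_mul, integral_sub_right_eq_self (fun v => ‖DD S c v‖ ^ 2 * Real.exp (-2 * |v|)) L]
    _ ≤ _ := by gcongr

lemma AA_cont (δ : ℝ) (S : Finset ℂ) : Continuous (AA δ S) := by
  unfold AA; fun_prop

lemma qq_int {δ : ℝ} (hδ : 0 < δ) (h1 : δ ≤ 1) (S : Finset ℂ) (hS : ∀ ρ ∈ S, zf ρ = 0 ∧ ρ.re = 1/2) (L : ℝ) (g : ℝ → ℝ) (hg : Continuous g) :
    IntegrableOn (fun u => ‖qq δ S u‖ ^ 2 * g u) (Set.Ioc 0 L) := by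
  obtain ⟨C, hC⟩ := qq_bd hδ h1 S hS
  have hi : IntegrableOn (fun u => (C * Real.exp u) ^ 2 * |g u|) (Set.Ioc 0 L) :=
    (Continuous.integrableOn_Icc (by fun_prop)).mono_set Set.Ioc_subset_Icc_self
  refine hi.mono' (((qq_meas δ S).norm.pow_const 2).mul hg.measurable).aestronglyMeasurable ?_
  filter_upwards [ae_restrict_mem measurableSet_Ioc] with u hu
  rw [norm_mul, norm_pow, norm_norm, Real.norm_eq_abs]
  gcongr
  exact hC u hu.1.le

lemma subst (f : ℝ → ℝ) (X : ℝ) (hX : 1 ≤ X) :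
    ∫ x in (1:ℝ)..X, f x = ∫ u in Set.Ioc 0 (Real.log X), Real.exp u * f (Real.exp u) := by
  rw [intervalIntegral.integral_of_le hX]
  have h4 : Set.Ioc (1:ℝ) X = Real.exp '' Set.Ioc 0 (Real.log X) := by
    ext x; constructor
    · intro hx
      have : 0 < x := lt_trans one_pos hx.1
      exact ⟨Real.log x, ⟨Real.log_pos hx.1, Real.log_le_log this hx.2⟩, Real.exp_log this⟩
    · rintro ⟨y, hy, rfl⟩
      refine ⟨Real.one_lt_exp_iff.2 hy.1, ?_⟩
      rw [← Real.exp_log (by linarith : 0 < X)]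
      exact Real.exp_le_exp.2 hy.2
  rw [h4, integral_image_eq_integral_abs_deriv_smul (f' := Real.exp) measurableSet_Ioc (fun x _ => (Real.hasDerivAt_exp x).hasDerivWithinAt) Real.exp_injective.injOn]
  simp

lemma final (hRH : RiemannHypothesis) {δ : ℝ} (hδ : 0 < δ) (h1 : δ ≤ 1) (X : ℝ) (hX : 1 ≤ X) :
    (∫ x in (1:ℝ)..X, (chebyshevPsi (x + δ * x) - chebyshevPsi x - δ * x) ^ 2)
        ≤ (6 * KE + 2 * (816293376 * J0 ^ 2)) * δ * X ^ 2 * (Real.log (2 / δ)) ^ 2 := by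
  set L := Real.log X with hL
  have hL0 : 0 ≤ L := Real.log_nonneg hX
  have hX0 : 0 < X := by linarith
  have hexpL : Real.exp (2 * L) = X ^ 2 := by
    rw [hL, show 2 * Real.log X = Real.log X + Real.log X by ring, Real.exp_add, Real.exp_log hX0]; ring
  set η : ℝ := 1 / (2 * (1 + L)) with hη
  have hη0 : 0 < η := by positivity
  have hη1 : η ≤ 1/2 := by
    rw [hη]
    apply one_div_le_one_div_of_le <;> linarith
  have hηL : 2 * η * L ≤ 1 := by
    have : 2 * η * L = L / (1 + L) := by rw [hη]; field_simp
    rw [this, div_le_one (by linarith)]; linarith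
  obtain ⟨S, hS, hq⟩ := main8 hRH hδ h1 hη0 hη1
  have hq := hq L hL0
  have hA := AA_int hδ h1 S hS L
  rw [hexpL] at hA
  have hlogp : 0 ≤ δ * Real.log (2/δ)^2 := by positivity
  rw [subst _ X hX, ← hL]
  have e1 : ∀ u : ℝ, 0 ≤ u → ((chebyshevPsi (Real.exp u + δ * Real.exp u) - chebyshevPsi (Real.exp u) - δ * Real.exp u : ℝ) : ℂ) = qq δ S u - AA δ S u := by
    intro u hu
    have : Real.exp u + δ * Real.exp u = Real.exp (u + lam δ) := by
      rw [Real.exp_add, lam, Real.exp_log (by linarith)]; ring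
    rw [this, cpsi_eq, cpsi_eq, qq, AA, ea_pos 1 u hu]
    simp_rw [ea_pos _ u hu]
    push_cast
    simp
  have i1 := qq_int hδ h1 S hS L Real.exp Real.continuous_exp
  have i1' := qq_int hδ h1 S hS L (fun u => Real.exp (-2*(1/2+η)*u)) (by fun_prop)
  have i2 : IntegrableOn (fun u => ‖AA δ S u‖ ^ 2 * Real.exp u) (Set.Ioc 0 L) := by
    have := AA_cont δ S
    exact (Continuous.integrableOn_Icc (by fun_prop)).mono_set Set.Ioc_subset_Icc_self
  have b1 : ∫ u in Set.Ioc 0 L, Real.exp u * (chebyshevPsi (Real.exp u + δ * Real.exp u) - chebyshevPsi (Real.exp u) - δ * Real.exp u) ^ 2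
      ≤ ∫ u in Set.Ioc 0 L, (2 * (‖qq δ S u‖ ^ 2 * Real.exp u) + 2 * (‖AA δ S u‖ ^ 2 * Real.exp u)) := by
    refine integral_mono_of_nonneg (Eventually.of_forall fun u => by positivity) ((i1.const_mul 2).add (i2.const_mul 2)) ?_
    filter_upwards [ae_restrict_mem measurableSet_Ioc] with u hu
    have h := e1 u hu.1.le
    have h2 : (chebyshevPsi (Real.exp u + δ * Real.exp u) - chebyshevPsi (Real.exp u) - δ * Real.exp u) ^ 2 = ‖qq δ S u - AA δ S u‖ ^ 2 := by
      rw [← h, Complex.norm_real, Real.norm_eq_abs, sq_abs]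
    rw [h2]
    have h3 := norm_sub_le (qq δ S u) (AA δ S u)
    have h4 : ‖qq δ S u - AA δ S u‖ ^ 2 ≤ 2 * ‖qq δ S u‖^2 + 2 * ‖AA δ S u‖^2 := by
      nlinarith [norm_nonneg (qq δ S u - AA δ S u), sq_nonneg (‖qq δ S u‖ - ‖AA δ S u‖), norm_nonneg (qq δ S u), norm_nonneg (AA δ S u)]
    have := mul_le_mul_of_nonneg_left h4 (Real.exp_pos u).le
    linarith
  have b2 : ∫ u in Set.Ioc 0 L, ‖qq δ S u‖ ^ 2 * Real.exp u ≤ 3 * X^2 * (KE * (δ * Real.log (2/δ)^2)) := by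
    calc _ ≤ ∫ u in Set.Ioc 0 L, (3 * X^2) * (‖qq δ S u‖ ^ 2 * Real.exp (-2*(1/2+η)*u)) := by
          refine integral_mono_of_nonneg (Eventually.of_forall fun u => by positivity) (i1'.const_mul _) ?_
          filter_upwards [ae_restrict_mem measurableSet_Ioc] with u hu
          have h5 : Real.exp u ≤ 3 * X^2 * Real.exp (-2*(1/2+η)*u) := by
            calc Real.exp u = Real.exp (2 * η * u) * Real.exp (2 * u) * Real.exp (-2*(1/2+η)*u) := by
                  rw [← Real.exp_add, ← Real.exp_add]; congr 1; ring
              _ ≤ 3 * X^2 * Real.exp (-2*(1/2+η)*u) := by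
                  have k1 : Real.exp (2 * η * u) ≤ 3 := by
                    have : Real.exp (2 * η * u) ≤ Real.exp 1 := Real.exp_le_exp.2 (by nlinarith [hu.2])
                    linarith [Real.exp_one_lt_d9]
                  have k2 : Real.exp (2 * u) ≤ X^2 := by
                    rw [← hexpL]; exact Real.exp_le_exp.2 (by linarith [hu.2])
                  gcongr
          have := mul_le_mul_of_nonneg_left h5 (by positivity : 0 ≤ ‖qq δ S u‖ ^ 2)
          linarith
      _ ≤ _ := by
          rw [integral_const_mul, ← intervalIntegral.integral_of_le hL0]
          gcongr
  refine b1.trans ?_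
  rw [integral_add (i1.const_mul 2) (i2.const_mul 2), integral_const_mul, integral_const_mul]
  nlinarith

end SV

/-- **Saffari–Vaughan bound.** Assuming RH,
`∫_{1}^{X} (ψ(x+δx) - ψ(x) - δx)² dx ≪ δ X² (log(2/δ))²` for `0 < δ ≤ 1`. -/
theorem saffari_vaughan_delta (hRH : RiemannHypothesis) :
    ∃ C : ℝ, 0 < C ∧ ∀ X : ℝ, 1 ≤ X → ∀ δ : ℝ, 0 < δ → δ ≤ 1 →
      (∫ x in (1:ℝ)..X, (chebyshevPsi (x + δ * x) - chebyshevPsi x - δ * x) ^ 2)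
        ≤ C * δ * X ^ 2 * (Real.log (2 / δ)) ^ 2 := by
  refine ⟨6 * SV.KE + 2 * (816293376 * SV.J0 ^ 2), ?_, fun X hX δ hδ h1 => SV.final hRH hδ h1 X hX⟩
  have := SV.J0_nonneg
  unfold SV.KE
  positivity
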